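/- arXiv:2207.02669 — 2 statements merged into one kernel-verified Lean document; each statement's English description precedes it below -/
import Mathlib

section
/- Every finite graph G admits an orientation of its edges in which every vertex has out-degree at most ⌈∇₀(G)⌉; in particular, a planar graph admits an orientation with maximum out-degree at most 3. -/
/-- A drawing of a simple graph in the plane: vertices are mapped to distinct
points, each edge is realized by a simple arc (homeomorphic image of `[0,1]`)
between the images of its endpoints, the interior of an arc avoids all vertex
images, and arcs of distinct edges meet only in common endpoints. -/
structure PlanarEmbedding {V : Type*} (G : SimpleGraph V) where
  vtx : V → ℝ × ℝ
  vtx_inj : Function.Injective vtx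
  arc : ∀ u v, G.Adj u v → Set (ℝ × ℝ)
  arc_symm : ∀ u v (h : G.Adj u v), arc u v h = arc v u h.symm
  arc_curve : ∀ u v (h : G.Adj u v), ∃ φ : Set.Icc (0:ℝ) 1 → ℝ × ℝ,
      Continuous φ ∧ Function.Injective φ ∧
      φ ⟨0, Set.mem_Icc.mpr (by norm_num)⟩ = vtx u ∧
      φ ⟨1, Set.mem_Icc.mpr (by norm_num)⟩ = vtx v ∧
      Set.range φ = arc u v h
  arc_vtx : ∀ u v (h : G.Adj u v) (w : V), vtx w ∈ arc u v h → w = u ∨ w = v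
  arc_disjoint : ∀ u v (h : G.Adj u v) u' v' (h' : G.Adj u' v'),
      s(u, v) ≠ s(u', v') →
      arc u v h ∩ arc u' v' h' ⊆
        ({vtx u, vtx v} : Set (ℝ × ℝ)) ∩ ({vtx u', vtx v'} : Set (ℝ × ℝ))

/-- A graph is planar if it admits a plane drawing. -/
def SimpleGraph.IsPlanar {V : Type*} (G : SimpleGraph V) : Prop :=
  Nonempty (PlanarEmbedding G)

/-- Twice the number of edges of the subgraph of `G` induced on `s`. -/
def pairCount {V : Type*} [Fintype V] [DecidableEq V] (G : SimpleGraph V)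
    [DecidableRel G.Adj] (s : Finset V) : ℕ :=
  (Finset.univ.filter fun p : V × V => p.1 ∈ s ∧ p.2 ∈ s ∧ G.Adj p.1 p.2).card

/-!
A density bound turns into an orientation by Hall's theorem: if every set `F` of edges spans at
least `#F / k` vertices, then each edge can choose one of its endpoints as its tail so that no
vertex is chosen more than `k` times. It remains to see that planar graphs satisfy `|E| ≤ 3 |V|`.

Only one feature of a plane drawing is retained: edges without a common endpoint have disjoint
images. This weak planarity survives the contraction of an edge. In a counterexample to the bound,
delete edges until it barely fails; then some vertex has degree at most five. If it is not
isolated, one of its edges lies in at most two triangles, and contracting that edge loses at most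
three edges: otherwise the neighbourhood of the vertex is so dense that contracting at most one
edge produces a `K₅`.

Finally `K₅` is not weakly planar. Given points `p i` and paths `γ i j` from `p i` to `p j`, let
`w i j k` be the increment of `log (γ i j - p k)`, so that
`exp (w i j k) = (p j - p k) / (p i - p k)`. If `γ i j` and `γ k l` are disjoint, then
`(s, t) ↦ γ i j s - γ k l t` has a logarithm on the square, and comparing two ways around its
boundary gives `w i j k + w k l j = w k l i + w i j l`. Half the sum of suitable cyclic families of
these relations is a vanishing sum of increments whose exponential is a product of quotients of
differences `p a - p b` that multiply up to `-1`, so `1 = -1`.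
-/

open scoped Finset SimpleGraph

/-! ### Increments of logarithms -/

theorem exists_continuous_exp_eq {A : Type*} [TopologicalSpace A] [SimplyConnectedSpace A]
    [LocallyPathConnectedSpace A] {f : A → ℂ} (hf : Continuous f) (hf₀ : ∀ a, f a ≠ 0) :
    ∃ L : A → ℂ, Continuous L ∧ ∀ a, Complex.exp (L a) = f a := by
  obtain ⟨a₀⟩ : Nonempty A := inferInstance
  obtain ⟨L, ⟨-, hL⟩, -⟩ := Complex.isCoveringMapOn_exp.existsUnique_continuousMap_lifts
    ⟨f, hf⟩ (a₀ := a₀) (Complex.exp_log (hf₀ a₀)) hf₀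
  exact ⟨L, L.continuous, congrFun hL⟩

theorem sub_eq_sub_of_exp_eq {A : Type*} [TopologicalSpace A] [PreconnectedSpace A]
    {L M : A → ℂ} (hL : Continuous L) (hM : Continuous M)
    (h : ∀ a, Complex.exp (L a) = Complex.exp (M a)) (a b : A) : L b - L a = M b - M a := by
  have hlift : L = fun t ↦ M t - M a + L a := by
    refine Complex.isCoveringMap_exp.eq_of_comp_eq hL (by fun_prop) (funext fun t ↦ ?_) a (by simp)
    simp [Complex.exp_add, Complex.exp_sub, h]
  linear_combination congrFun hlift b

open Classical in
/-- The increment along `[0, 1]` of a continuous branch of `log f`, for a continuous nowhere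
vanishing function `f`; it is `2πi` times the winding number when `f 0 = f 1`. The value is `0`
if there is no such branch. -/
noncomputable def logIncrement (f : ℝ → ℂ) : ℂ :=
  if h : ∃ L : ℝ → ℂ, Continuous L ∧ ∀ t, Complex.exp (L t) = f t then h.choose 1 - h.choose 0
  else 0

theorem logIncrement_eq_sub {f L : ℝ → ℂ} (hL : Continuous L)
    (h : ∀ t, Complex.exp (L t) = f t) : logIncrement f = L 1 - L 0 := by
  have hex : ∃ L : ℝ → ℂ, Continuous L ∧ ∀ t, Complex.exp (L t) = f t := ⟨L, hL, h⟩
  rw [logIncrement, dif_pos hex]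
  exact sub_eq_sub_of_exp_eq hex.choose_spec.1 hL
    (fun t ↦ (hex.choose_spec.2 t).trans (h t).symm) 0 1

theorem exp_logIncrement {f : ℝ → ℂ} (hf : Continuous f) (hf₀ : ∀ t, f t ≠ 0) :
    Complex.exp (logIncrement f) = f 1 / f 0 := by
  obtain ⟨L, hL, hLf⟩ := exists_continuous_exp_eq hf hf₀
  rw [logIncrement_eq_sub hL hLf, Complex.exp_sub, hLf, hLf]

theorem logIncrement_neg {f : ℝ → ℂ} (hf : Continuous f) (hf₀ : ∀ t, f t ≠ 0) :
    logIncrement (-f) = logIncrement f := by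
  obtain ⟨L, hL, hLf⟩ := exists_continuous_exp_eq hf hf₀
  rw [logIncrement_eq_sub hL hLf,
    logIncrement_eq_sub (L := fun t ↦ L t + Real.pi * Complex.I) (by fun_prop)
      (by simp [Complex.exp_add, hLf])]
  ring

theorem logIncrement_add_logIncrement_eq_of_square {f : ℝ × ℝ → ℂ} (hf : Continuous f)
    (hf₀ : ∀ x, f x ≠ 0) :
    logIncrement (fun t ↦ f (t, 0)) + logIncrement (fun t ↦ f (1, t)) =
      logIncrement (fun t ↦ f (0, t)) + logIncrement (fun t ↦ f (t, 1)) := by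
  obtain ⟨L, hL, hLf⟩ := exists_continuous_exp_eq hf hf₀
  rw [logIncrement_eq_sub (L := fun t ↦ L (t, 0)) (by fun_prop) fun _ ↦ hLf _,
    logIncrement_eq_sub (L := fun t ↦ L (1, t)) (by fun_prop) fun _ ↦ hLf _,
    logIncrement_eq_sub (L := fun t ↦ L (0, t)) (by fun_prop) fun _ ↦ hLf _,
    logIncrement_eq_sub (L := fun t ↦ L (t, 1)) (by fun_prop) fun _ ↦ hLf _]
  ring

theorem logIncrement_sub_add_logIncrement_sub_eq {γ δ : ℝ → ℂ} (hγ : Continuous γ)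
    (hδ : Continuous δ) (h : ∀ s t, γ s ≠ δ t) :
    logIncrement (γ · - δ 0) + logIncrement (δ · - γ 1) =
      logIncrement (δ · - γ 0) + logIncrement (γ · - δ 1) := by
  have hswap (s : ℝ) : logIncrement (δ · - γ s) = logIncrement (γ s - δ ·) := by
    rw [← logIncrement_neg (by fun_prop) fun t ↦ sub_ne_zero.2 (h s t)]
    congr 1
    ext t
    simp
  rw [hswap, hswap]
  exact logIncrement_add_logIncrement_eq_of_square (f := fun x ↦ γ x.1 - δ x.2) (by fun_prop)
    fun x ↦ sub_ne_zero.2 (h x.1 x.2)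

/-! ### Weakly planar graphs and `K₅` -/

/-- A topological relaxation of planarity: the edges of `G` can be realised by path-connected
planar sets (`K u v` for the edge `uv`) such that independent edges have disjoint realisations.
Adjacent edges may meet, which makes the property stable under contractions. -/
def IsWeaklyPlanar {V : Type*} (G : SimpleGraph V) : Prop :=
  ∃ (p : V → ℂ) (K : V → V → Set ℂ),
    (∀ ⦃u v⦄, G.Adj u v → JoinedIn (K u v) (p u) (p v)) ∧
    ∀ ⦃u v⦄, G.Adj u v → ∀ ⦃w x⦄, G.Adj w x → Disjoint ({u, v} : Set V) {w, x} →
      Disjoint (K u v) (K w x)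

theorem prod_ratio_sub_fin_five {𝕜 : Type*} [Field 𝕜] {p : Fin 5 → 𝕜}
    (hp : Function.Injective p) :
    ∏ i, ((p (i + 1) - p (i + 4)) / (p i - p (i + 4)) /
      ((p (i + 1) - p (i + 3)) / (p i - p (i + 3))) *
      ((p (i + 2) - p (i + 1)) / (p i - p (i + 1))) /
      ((p (i + 2) - p (i + 4)) / (p i - p (i + 4)))) = -1 := by
  let D (d : Fin 5) : 𝕜 := ∏ i, (p (i + d) - p i)
  have hD {d : Fin 5} (hd : d ≠ 0) : D d ≠ 0 :=
    Finset.prod_ne_zero_iff.2 fun i _ ↦ sub_ne_zero.2 (hp.ne (by simpa))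
  have hshift (a b : Fin 5) : ∏ i, (p (i + a) - p (i + b)) = D (a - b) := by
    simpa [D, add_assoc] using Equiv.prod_comp (Equiv.addRight b) fun i ↦ p (i + (a - b)) - p i
  have hshift₀ (b : Fin 5) : ∏ i, (p i - p (i + b)) = D (-b) := by simpa using hshift 0 b
  have hneg (d : Fin 5) : D (-d) = -D d := by
    rw [← hshift₀]
    simp_rw [← neg_sub (p (_ + d)), Finset.prod_neg]
    norm_num [D]
  have h₁ := hD (d := 1) (by decide)
  have h₂ := hD (d := 2) (by decide)
  simp only [Finset.prod_mul_distrib, Finset.prod_div_distrib, hshift, hshift₀]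
  rw [hneg 1, show (1 - 4 : Fin 5) = 2 by decide, show (-4 : Fin 5) = 1 by decide,
    show (1 - 3 : Fin 5) = -2 by decide, show (2 - 4 : Fin 5) = -2 by decide,
    show (-3 : Fin 5) = 2 by decide, show (2 - 1 : Fin 5) = 1 by decide, hneg 2]
  field_simp

theorem exists_ne_of_log_ratio_fin_five {p : Fin 5 → ℂ} (hp : Function.Injective p)
    {w : Fin 5 → Fin 5 → Fin 5 → ℂ}
    (hw : ∀ i j k, [i, j, k].Nodup → Complex.exp (w i j k) = (p j - p k) / (p i - p k)) :
    ∃ i j k l, [i, j, k, l].Nodup ∧ w i j k + w k l j ≠ w k l i + w i j l := by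
  by_contra! hsquare
  have hsum : ∑ i, (w i (i + 1) (i + 4) - w i (i + 1) (i + 3) + w i (i + 2) (i + 1)
      - w i (i + 2) (i + 4)) = 0 := by
    have h₁ := Finset.sum_congr (Eq.refl Finset.univ)
      fun i _ ↦ hsquare i (i + 1) (i + 2) (i + 3) (by decide +revert)
    have h₂ := Finset.sum_congr (Eq.refl Finset.univ)
      fun i _ ↦ hsquare i (i + 2) (i + 1) (i + 3) (by decide +revert)
    have h₃ := Finset.sum_congr (Eq.refl Finset.univ)
      fun i _ ↦ hsquare i (i + 2) (i + 3) (i + 4) (by decide +revert)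
    simp only [Fin.sum_univ_five, Fin.reduceAdd, zero_add] at h₁ h₂ h₃ ⊢
    linear_combination (h₁ + h₂ + h₃) / 2
  have hprod := prod_ratio_sub_fin_five hp
  have hexp (i : Fin 5) : (p (i + 1) - p (i + 4)) / (p i - p (i + 4)) /
      ((p (i + 1) - p (i + 3)) / (p i - p (i + 3))) *
      ((p (i + 2) - p (i + 1)) / (p i - p (i + 1))) /
      ((p (i + 2) - p (i + 4)) / (p i - p (i + 4))) =
      Complex.exp (w i (i + 1) (i + 4) - w i (i + 1) (i + 3) + w i (i + 2) (i + 1)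
        - w i (i + 2) (i + 4)) := by
    rw [Complex.exp_sub, Complex.exp_add, Complex.exp_sub, hw _ _ _ (by decide +revert),
      hw _ _ _ (by decide +revert), hw _ _ _ (by decide +revert), hw _ _ _ (by decide +revert)]
  simp_rw [hexp, ← Complex.exp_sum, hsum] at hprod
  norm_num at hprod

theorem exists_not_disjoint_range_path_fin_five {p : Fin 5 → ℂ} (γ : ∀ i j, Path (p i) (p j)) :
    ∃ i j k l, [i, j, k, l].Nodup ∧ ¬ Disjoint (Set.range (γ i j)) (Set.range (γ k l)) := by
  by_contra! hdisj
  have hne (i j k l) (h : [i, j, k, l].Nodup) (s t : ℝ) : (γ i j).extend s ≠ (γ k l).extend t :=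
    (hdisj i j k l h).ne_of_mem (Set.mem_range_self _) (Set.mem_range_self _)
  have hvertex (i j k) (h : [i, j, k].Nodup) (t : ℝ) : (γ i j).extend t ≠ p k := by
    obtain ⟨l, hl⟩ : ∃ l, [i, j, k, l].Nodup := by clear hne hdisj γ; decide +revert
    simpa using hne i j k l hl t 0
  have hp : Function.Injective p := by
    intro i k hik
    by_contra hki
    obtain ⟨j, hj⟩ : ∃ j, [i, j, k].Nodup := by clear hvertex hne hdisj hik γ; decide +revert
    exact hvertex i j k hj 0 (by simpa using hik)
  obtain ⟨i, j, k, l, hijkl, hsquare⟩ := exists_ne_of_log_ratio_fin_five hp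
    (w := fun i j k ↦ logIncrement ((γ i j).extend · - p k)) fun i j k h ↦ by
      simpa using exp_logIncrement (f := ((γ i j).extend · - p k)) (by fun_prop)
        fun t ↦ sub_ne_zero.2 (hvertex i j k h t)
  refine hsquare ?_
  simpa using logIncrement_sub_add_logIncrement_sub_eq (γ i j).continuous_extend
    (γ k l).continuous_extend (hne i j k l hijkl)

variable {V W : Type*} {G : SimpleGraph V} {H : SimpleGraph W}

theorem IsWeaklyPlanar.of_isContained (hG : IsWeaklyPlanar G) (hHG : H ⊑ G) :
    IsWeaklyPlanar H := by
  obtain ⟨p, K, hjoined, hdisj⟩ := hG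
  obtain ⟨f⟩ := hHG
  refine ⟨p ∘ f, fun u v ↦ K (f u) (f v), fun u v huv ↦ hjoined (f.toHom.map_adj huv),
    fun u v huv w x hwx h ↦ hdisj (f.toHom.map_adj huv) (f.toHom.map_adj hwx) ?_⟩
  have himage := (Set.disjoint_image_iff f.injective).2 h
  rwa [Set.image_pair, Set.image_pair] at himage

theorem not_isWeaklyPlanar_completeGraph_fin_five :
    ¬ IsWeaklyPlanar (SimpleGraph.completeGraph (Fin 5)) := by
  rintro ⟨p, K, hjoined, hdisj⟩
  have hpath (i j : Fin 5) : ∃ γ : Path (p i) (p j), i ≠ j → Set.range γ ⊆ K i j := by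
    by_cases hij : i = j
    · exact ⟨(PathConnectedSpace.joined _ _).somePath, fun h ↦ absurd hij h⟩
    · obtain ⟨γ, hγ⟩ := hjoined hij
      exact ⟨γ, fun _ ↦ Set.range_subset_iff.2 hγ⟩
  choose γ hγ using hpath
  obtain ⟨i, j, k, l, hijkl, hmeet⟩ := exists_not_disjoint_range_path_fin_five γ
  have hij : i ≠ j := by grind
  have hkl : k ≠ l := by grind
  have hindep : Disjoint ({i, j} : Set (Fin 5)) {k, l} := by
    simp only [Set.disjoint_insert_left, Set.disjoint_singleton_left]
    grind
  exact hmeet ((hdisj hij hkl hindep).mono (hγ i j hij) (hγ k l hkl))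

theorem IsWeaklyPlanar.cliqueFree_five (hG : IsWeaklyPlanar G) : G.CliqueFree 5 := by
  by_contra h
  rw [SimpleGraph.not_cliqueFree_iff_top_isContained] at h
  exact not_isWeaklyPlanar_completeGraph_fin_five (hG.of_isContained h)

/-! ### Contractions and the number of edges -/

theorem joinedIn_of_reachable {X : Type*} [TopologicalSpace X] {p : V → X} {F : Set X}
    (hF : ∀ ⦃u v⦄, G.Adj u v → JoinedIn F (p u) (p v)) {u v : V} (hu : p u ∈ F)
    (huv : G.Reachable u v) : JoinedIn F (p u) (p v) := by
  obtain ⟨q⟩ := huv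
  induction q with
  | nil => exact JoinedIn.refl hu
  | cons h _ ih => exact (hF h).trans (ih (hF h).target_mem)

theorem IsWeaklyPlanar.map (hG : IsWeaklyPlanar G) {f : V → W}
    (hf : ∀ w, (G.induce (f ⁻¹' {w})).Connected) : IsWeaklyPlanar (G.map f) := by
  obtain ⟨p, K, hjoined, hdisj⟩ := hG
  have hsurj : Function.Surjective f := fun w ↦ (hf w).nonempty.elim fun x ↦ ⟨x, x.2⟩
  choose g hg using hsurj
  let R (a b : W) : Set ℂ := ⋃ (x) (y) (_ : G.Adj x y ∧ f x ∈ ({a, b} : Set W) ∧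
    f y ∈ ({a, b} : Set W)), K x y
  have hR {a b x y} (hxy : G.Adj x y) (hx : f x ∈ ({a, b} : Set W))
      (hy : f y ∈ ({a, b} : Set W)) : JoinedIn (R a b) (p x) (p y) :=
    (hjoined hxy).mono <| Set.subset_iUnion₂_of_subset x y <|
      Set.subset_iUnion_of_subset ⟨hxy, hx, hy⟩ le_rfl
  have hfibre {a b x} (hx : f x ∈ ({a, b} : Set W)) (hpx : p x ∈ R a b) :
      JoinedIn (R a b) (p x) (p (g (f x))) :=
    joinedIn_of_reachable (p := fun z : f ⁻¹' {f x} ↦ p z)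
      (fun u v huv ↦ hR huv (by rwa [u.2]) (by rwa [v.2])) hpx
      ((hf (f x)).preconnected ⟨x, rfl⟩ ⟨g (f x), hg _⟩)
  refine ⟨p ∘ g, R, ?_, ?_⟩
  · rintro a b ⟨-, x, y, hxy, rfl, rfl⟩
    have hjoin := hR hxy (Set.mem_insert _ _) (Set.mem_insert_of_mem _ rfl)
    exact ((hfibre (Set.mem_insert _ _) hjoin.source_mem).symm.trans hjoin).trans
      (hfibre (Set.mem_insert_of_mem _ rfl) hjoin.target_mem)
  · rintro a b - c d - hindep
    simp only [R, Set.disjoint_iUnion_left, Set.disjoint_iUnion_right]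
    rintro x' y' ⟨hxy', hx', hy'⟩ x y ⟨hxy, hx, hy⟩
    exact hdisj hxy hxy' <| (hindep.preimage f).mono
      (Set.pair_subset hx hy) (Set.pair_subset hx' hy')

open Classical in
/-- The map identifying `v` with the other vertex `u`. The graph `G.map (mergeVertex h)` is the
contraction of `G` along the edge `uv`; its loops are removed by `SimpleGraph.map`. -/
noncomputable def mergeVertex {u v : V} (h : u ≠ v) (x : V) : ({v}ᶜ : Set V) :=
  if hx : x = v then ⟨u, h⟩ else ⟨x, hx⟩

theorem mergeVertex_eq_mergeVertex_iff {u v : V} (h : u ≠ v) {x y : V} :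
    mergeVertex h x = mergeVertex h y ↔ x = y ∨ x = u ∧ y = v ∨ x = v ∧ y = u := by
  grind [mergeVertex]

theorem connected_induce_preimage_mergeVertex {u v : V} (h : G.Adj u v) (w : ({v}ᶜ : Set V)) :
    (G.induce (mergeVertex h.ne ⁻¹' {w})).Connected := by
  obtain ⟨w, hw : w ≠ v⟩ := w
  by_cases hwu : w = u
  · have hfibre : mergeVertex h.ne ⁻¹' {⟨w, hw⟩} = {u, v} := by
      ext x
      simp only [mergeVertex, Set.mem_preimage, Set.mem_singleton_iff, Set.mem_insert_iff]
      grind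
    rw [hfibre]
    exact SimpleGraph.induce_pair_connected_of_adj h
  · have hfibre : mergeVertex h.ne ⁻¹' {⟨w, hw⟩} = {w} := by
      ext x
      simp only [mergeVertex, Set.mem_preimage, Set.mem_singleton_iff]
      grind
    rw [hfibre]
    exact SimpleGraph.Connected.of_subsingleton

theorem IsWeaklyPlanar.map_mergeVertex (hG : IsWeaklyPlanar G) {u v : V} (h : G.Adj u v) :
    IsWeaklyPlanar (G.map (mergeVertex h.ne)) :=
  hG.map (connected_induce_preimage_mergeVertex h)

theorem ncard_edgeSet_le_ncard_edgeSet_map_mergeVertex_add [Finite V] {u v : V} (h : u ≠ v) :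
    G.edgeSet.ncard ≤
      (G.map (mergeVertex h)).edgeSet.ncard + (G.commonNeighbors u v).ncard + 1 := by
  let S : Set (Sym2 V) := (s(v, ·)) '' insert u (G.commonNeighbors u v)
  have hS : S.ncard ≤ (G.commonNeighbors u v).ncard + 1 :=
    (Set.ncard_image_le (Set.toFinite _)).trans (Set.ncard_insert_le _ _)
  have hmem (a b : V) : s(a, b) ∈ S ↔ a = v ∧ (b = u ∨ G.Adj u b ∧ G.Adj v b) ∨
      b = v ∧ (a = u ∨ G.Adj u a ∧ G.Adj v a) := by
    simp only [S, Set.mem_image, Set.mem_insert_iff, SimpleGraph.mem_commonNeighbors, Sym2.eq_iff]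
    grind
  have hsdiff : (G.edgeSet \ S).ncard ≤ (G.map (mergeVertex h)).edgeSet.ncard := by
    refine Set.ncard_le_ncard_of_injOn (Sym2.map (mergeVertex h)) ?_ ?_ (Set.toFinite _)
    · rintro ⟨a, b⟩ ⟨hab : G.Adj a b, habS⟩
      change (G.map (mergeVertex h)).Adj (mergeVertex h a) (mergeVertex h b)
      refine SimpleGraph.map_adj_apply' hab fun heq ↦ habS ?_
      rw [mergeVertex_eq_mergeVertex_iff] at heq
      exact (hmem a b).2 (by grind [hab.ne])
    · rintro ⟨a, b⟩ ⟨hab : G.Adj a b, habS⟩ ⟨c, d⟩ ⟨hcd : G.Adj c d, hcdS⟩ heq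
      change s(mergeVertex h a, mergeVertex h b) = s(mergeVertex h c, mergeVertex h d) at heq
      simp only [Sym2.eq_iff, mergeVertex_eq_mergeVertex_iff] at heq
      exact Sym2.eq_iff.2 (by grind [hab.ne, hcd.ne, G.adj_comm])
  have := Set.ncard_le_ncard_sdiff_add_ncard G.edgeSet S
  lia

theorem IsWeaklyPlanar.exists_not_adj_of_isNClique_four (hG : IsWeaklyPlanar G) {t : Finset V}
    (ht : G.IsNClique 4 t) {x c : V} (hxc : G.Adj x c) (hx : x ∉ t) (hc : c ∉ t) :
    ∃ w ∈ t, ¬ G.Adj x w ∧ ¬ G.Adj c w := by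
  classical
  by_contra! hdom
  -- The contraction of `xc` turns `t` together with the new vertex into a `K₅`.
  let f := mergeVertex hxc.ne
  have hf {a b} (hab : f a = f b) : a = b ∨ a = x ∧ b = c ∨ a = c ∧ b = x :=
    (mergeVertex_eq_mergeVertex_iff _).1 hab
  have hfxc : f x = f c := (mergeVertex_eq_mergeVertex_iff _).2 (by simp)
  have himage : (G.map f).IsNClique 4 (t.image f) := by
    refine ⟨?_, by rw [Finset.card_image_of_injOn (by grind [Set.InjOn]), ht.card_eq]⟩
    rw [Finset.coe_image]
    rintro _ ⟨a, ha, rfl⟩ _ ⟨b, hb, rfl⟩ hab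
    exact SimpleGraph.map_adj_apply' (ht.isClique ha hb (ne_of_apply_ne f hab)) hab
  refine (hG.map_mergeVertex hxc).cliqueFree_five _ (himage.insert (a := f x) ?_)
  simp only [Finset.forall_mem_image]
  intro w hw
  have hne : f x ≠ f w := by grind
  by_cases hxw : G.Adj x w
  · exact SimpleGraph.map_adj_apply' hxw hne
  · rw [hfxc] at hne ⊢
    exact SimpleGraph.map_adj_apply' (hdom w hw hxw) hne

theorem IsWeaklyPlanar.not_adj_of_forall_adj (hG : IsWeaklyPlanar G) {v x y c d e : V}
    (hvx : G.Adj v x) (hvy : G.Adj v y) (hxy : x ≠ y) (hce : c ≠ e) (hde : d ≠ e)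
    (h : ∀ z ∈ ({c, d, e} : Set V), G.Adj v z ∧ G.Adj x z ∧ G.Adj y z) : ¬ G.Adj c d := by
  classical
  intro hcd
  obtain ⟨hvc, hxc, hyc⟩ := h c (by simp)
  obtain ⟨hvd, hxd, hyd⟩ := h d (by simp)
  obtain ⟨hve, hxe, hye⟩ := h e (by simp)
  have ht : G.IsNClique 4 {v, y, c, d} :=
    (((SimpleGraph.isNClique_singleton.2 rfl).insert (by simpa)).insert
      (by simp [hyc, hyd])).insert (by simp [hvy, hvc, hvd])
  obtain ⟨w, hw, hxw, hew⟩ := hG.exists_not_adj_of_isNClique_four ht hxe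
    (by simp [hvx.ne', hxy, hxc.ne, hxd.ne]) (by simp [hve.ne', hye.ne', hce.symm, hde.symm])
  simp only [Finset.mem_insert, Finset.mem_singleton] at hw
  rcases hw with rfl | rfl | rfl | rfl
  exacts [hxw hvx.symm, hew hye.symm, hxw hxc, hxw hxd]

theorem adj_of_not_adj_of_card_le_five [DecidableRel G.Adj] {N : Finset V} (hN : #N ≤ 5)
    {x y w : V} (hx : x ∈ N) (hy : y ∈ N) (hw : w ∈ N) (hyx : y ≠ x) (hwx : w ≠ x) (hyw : y ≠ w)
    (hthree : 3 ≤ #{z ∈ N | G.Adj x z}) (hxy : ¬ G.Adj x y) : G.Adj x w := by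
  classical
  by_contra hxw
  have hsub : {z ∈ N | G.Adj x z} ⊆ N \ {x, y, w} := by grind [SimpleGraph.irrefl]
  have hcard : #({x, y, w} : Finset V) = 3 :=
    Finset.card_eq_three.2 ⟨x, y, w, hyx.symm, hwx.symm, hyw, rfl⟩
  have := Finset.card_le_card hsub
  rw [Finset.card_sdiff_of_subset (by grind), hcard] at this
  lia

theorem IsWeaklyPlanar.exists_ncard_commonNeighbors_le_two (hG : IsWeaklyPlanar G) {v : V}
    [Fintype (G.neighborSet v)] (hpos : 0 < G.degree v) (hdeg : G.degree v ≤ 5) :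
    ∃ u, G.Adj u v ∧ (G.commonNeighbors u v).ncard ≤ 2 := by
  classical
  by_contra! hcommon
  set N := G.neighborFinset v
  have hmem {u} : u ∈ N ↔ G.Adj v u := G.mem_neighborFinset v u
  have hthree {u} (hu : u ∈ N) : 3 ≤ #{w ∈ N | G.Adj u w} := by
    have hset : G.commonNeighbors u v = {w ∈ N | G.Adj u w} := by
      ext w
      simp [hmem, SimpleGraph.mem_commonNeighbors, and_comm]
    have := hcommon u (hmem.1 hu).symm
    rwa [hset, Set.ncard_coe_finset] at this
  by_cases hclique : G.IsClique N
  · obtain ⟨u, hu⟩ := Finset.card_pos.1 hpos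
    have hlt : #{w ∈ N | G.Adj u w} < #N :=
      Finset.card_lt_card (Finset.filter_ssubset.2 ⟨u, hu, G.irrefl⟩)
    have hinsert : G.IsNClique (#N + 1) (insert v N) :=
      SimpleGraph.IsNClique.insert ⟨hclique, rfl⟩ fun b hb ↦ hmem.1 hb
    exact hG.cliqueFree_five.mono (by have := hthree hu; lia) _ hinsert
  · obtain ⟨x, hx, y, hy, hxy, hnadj⟩ : ∃ x ∈ N, ∃ y ∈ N, x ≠ y ∧ ¬ G.Adj x y := by
      simpa [SimpleGraph.isClique_iff, Set.Pairwise] using hclique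
    obtain ⟨c, hc, d, hd, e, he, hcd, hce, hde⟩ := Finset.two_lt_card.1 (hthree hx)
    have hall (z) (hz : z ∈ ({c, d, e} : Set V)) : G.Adj v z ∧ G.Adj x z ∧ G.Adj y z := by
      obtain ⟨hzN, hxz⟩ : z ∈ N ∧ G.Adj x z := by grind
      refine ⟨hmem.1 hzN, hxz, adj_of_not_adj_of_card_le_five hdeg hy hx hzN hxy ?_ hxz.ne
        (hthree hy) (by rwa [G.adj_comm])⟩
      rintro rfl
      exact hnadj hxz
    have hvx := hmem.1 hx
    have hvy := hmem.1 hy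
    refine hG.not_adj_of_forall_adj hvx hvy hxy hcd hde.symm (by grind) ?_
    exact adj_of_not_adj_of_card_le_five hdeg (by grind) (by grind) (by grind) hcd.symm hce.symm hde
      (hthree (by grind)) (hG.not_adj_of_forall_adj hvx hvy hxy hce hde hall)

theorem exists_degree_lt_of_two_mul_card_edgeFinset_lt [Fintype V] [DecidableRel G.Adj] {d : ℕ}
    (h : 2 * #G.edgeFinset < d * Fintype.card V) : ∃ v, G.degree v < d := by
  by_contra! hd
  rw [← G.sum_degrees_eq_twice_card_edges, mul_comm, ← smul_eq_mul] at h
  exact h.not_ge (Finset.card_nsmul_le_sum _ _ _ fun v _ ↦ hd v)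

theorem ncard_edgeSet_induce_compl_singleton_of_degree_eq_zero [Fintype V] {v : V}
    [DecidableRel G.Adj] (hv : G.degree v = 0) :
    (G.induce {v}ᶜ).edgeSet.ncard = G.edgeSet.ncard := by
  classical
  have hcard := G.card_edgeFinset_induce_compl_singleton v
  rw [G.card_edgeFinset_deleteIncidenceSet, hv, Nat.sub_zero] at hcard
  rwa [← SimpleGraph.coe_edgeFinset, ← SimpleGraph.coe_edgeFinset, Set.ncard_coe_finset,
    Set.ncard_coe_finset]

theorem IsWeaklyPlanar.exists_ncard_edgeSet_le_add_three [Fintype V] [DecidableRel G.Adj]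
    (hG : IsWeaklyPlanar G) {v : V} (hv : G.degree v ≤ 5) :
    ∃ H : SimpleGraph ({v}ᶜ : Set V), IsWeaklyPlanar H ∧
      G.edgeSet.ncard ≤ H.edgeSet.ncard + 3 := by
  rcases (G.degree v).eq_zero_or_pos with hzero | hpos
  · refine ⟨G.induce {v}ᶜ, hG.of_isContained ⟨(SimpleGraph.Embedding.induce _).toCopy⟩, ?_⟩
    rw [ncard_edgeSet_induce_compl_singleton_of_degree_eq_zero hzero]
    lia
  · obtain ⟨u, huv, hcommon⟩ := hG.exists_ncard_commonNeighbors_le_two hpos hv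
    refine ⟨_, hG.map_mergeVertex huv, ?_⟩
    have := ncard_edgeSet_le_ncard_edgeSet_map_mergeVertex_add (G := G) huv.ne
    lia

theorem exists_le_ncard_edgeSet_eq {k : ℕ} (hk : k ≤ G.edgeSet.ncard) :
    ∃ H ≤ G, H.edgeSet.ncard = k := by
  obtain ⟨E, hEG, hE⟩ := Set.exists_subset_card_eq hk
  refine ⟨.fromEdgeSet E, (G.fromEdgeSet_le).2 (Set.sdiff_subset.trans hEG), ?_⟩
  rw [SimpleGraph.edgeSet_fromEdgeSet, sdiff_eq_left.2, hE]
  exact Set.disjoint_left.2 fun e he ↦ G.not_isDiag_of_mem_edgeSet (hEG he)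

theorem IsWeaklyPlanar.ncard_edgeSet_add_two_le [Finite V] [Nonempty V] (hG : IsWeaklyPlanar G) :
    G.edgeSet.ncard + 2 ≤ 3 * Nat.card V := by
  classical
  induction hn : Nat.card V generalizing V with
  | zero => exact absurd hn Nat.card_pos.ne'
  | succ n ih =>
    have := Fintype.ofFinite V
    rcases subsingleton_or_nontrivial V with _ | _
    · rw [Subsingleton.elim G ⊥, SimpleGraph.edgeSet_bot, Set.ncard_empty]
      lia
    by_contra! hlt
    -- With exactly `3 * n + 2` edges on `n + 1` vertices, the average degree is less than six.
    obtain ⟨H, hHG, hH⟩ := exists_le_ncard_edgeSet_eq (G := G) (k := 3 * n + 2) (by lia)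
    obtain ⟨v, hv⟩ : ∃ v, H.degree v < 6 := by
      refine exists_degree_lt_of_two_mul_card_edgeFinset_lt ?_
      rw [← Set.ncard_coe_finset, SimpleGraph.coe_edgeFinset, hH, ← Nat.card_eq_fintype_card, hn]
      lia
    obtain ⟨H', hH', hle⟩ := (hG.of_isContained (.of_le hHG)).exists_ncard_edgeSet_le_add_three
      (v := v) (by lia)
    have hcard : Nat.card ({v}ᶜ : Set V) = n := by
      rw [Nat.card_coe_set_eq, Set.ncard_compl, Set.ncard_singleton, hn, Nat.add_sub_cancel]
    have hnonempty : Nonempty ({v}ᶜ : Set V) := (Set.nonempty_compl_of_nontrivial v).to_subtype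
    have := ih hH' hcard
    lia

theorem isWeaklyPlanar_of_isPlanar (hG : G.IsPlanar) : IsWeaklyPlanar G := by
  obtain ⟨P⟩ := hG
  let e := Complex.equivRealProdCLM.symm
  refine ⟨e ∘ P.vtx, fun u v ↦ ⋃ h : G.Adj u v, e '' P.arc u v h, fun u v h ↦ ?_,
    fun u v h w x h' hindep ↦ ?_⟩
  · obtain ⟨φ, hφ, -, hφ₀, hφ₁, hrange⟩ := P.arc_curve u v h
    refine ⟨⟨⟨e ∘ φ, by fun_prop⟩, congrArg e hφ₀, congrArg e hφ₁⟩, fun t ↦ ?_⟩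
    exact Set.mem_iUnion_of_mem h ⟨φ t, hrange ▸ Set.mem_range_self t, rfl⟩
  · simp only [h, h', Set.iUnion_true]
    rw [Set.disjoint_image_iff e.injective]
    have hends := (Set.disjoint_image_iff P.vtx_inj).2 hindep
    rw [Set.image_pair, Set.image_pair] at hends
    refine Set.disjoint_iff.2 ((P.arc_disjoint u v h w x h' ?_).trans (Set.disjoint_iff.1 hends))
    intro heq
    have hu : u ∉ ({w, x} : Set V) := Set.disjoint_left.1 hindep (Set.mem_insert _ _)
    exact hu (Sym2.mem_iff.1 (heq ▸ Sym2.mem_mk_left u v))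

/-! ### Orientations -/

theorem exists_forall_mem_encard_preimage_le {ι α : Type*} [DecidableEq α] {t : ι → Finset α}
    {k : ℕ} (h : ∀ F : Finset ι, #F ≤ k * #(F.biUnion t)) :
    ∃ f : ι → α, (∀ i, f i ∈ t i) ∧ ∀ a, (f ⁻¹' {a}).encard ≤ k := by
  have hall (F : Finset ι) :
      #F ≤ #(F.biUnion fun i ↦ t i ×ˢ (Finset.univ : Finset (Fin k))) := by
    have hprod : (F.biUnion fun i ↦ t i ×ˢ (Finset.univ : Finset (Fin k))) =
        F.biUnion t ×ˢ Finset.univ := by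
      ext ⟨a, j⟩
      simp
    rw [hprod, Finset.card_product, Finset.card_univ, Fintype.card_fin, mul_comm]
    exact h F
  obtain ⟨f, hf, hft⟩ := (Finset.all_card_le_biUnion_card_iff_exists_injective _).1 hall
  refine ⟨fun i ↦ (f i).1, fun i ↦ (Finset.mem_product.1 (hft i)).1, fun a ↦ ?_⟩
  have hinj : Set.InjOn (fun i ↦ (f i).2) ((fun i ↦ (f i).1) ⁻¹' {a}) :=
    fun i hi j hj hij ↦ hf (Prod.ext (hi.trans hj.symm) hij)
  simpa using Set.encard_le_encard_of_injOn (Set.mapsTo_univ _ _) hinj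

/-- An orientation of `G`, encoded as the relation `r` in which `r u w` means that the edge `uw`
is directed from `u` to `w`. -/
def IsOrientation (G : SimpleGraph V) (r : V → V → Prop) : Prop :=
  (∀ u w, G.Adj u w ↔ r u w ∨ r w u) ∧ ∀ u w, r u w → ¬ r w u

theorem isOrientation_of_forall_mem {f : G.edgeSet → V} (hf : ∀ e, f e ∈ e.1) :
    IsOrientation G fun u w ↦ ∃ h : G.Adj u w, f ⟨s(u, w), h⟩ = u := by
  have hswap {u w : V} (h : G.Adj u w) : f ⟨s(w, u), h.symm⟩ = f ⟨s(u, w), h⟩ :=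
    congrArg f (Subtype.ext Sym2.eq_swap)
  refine ⟨fun u w ↦ ⟨fun h ↦ ?_, ?_⟩, ?_⟩
  · rcases Sym2.mem_iff.1 (hf ⟨s(u, w), h⟩) with hu | hw
    exacts [.inl ⟨h, hu⟩, .inr ⟨h.symm, (hswap h).trans hw⟩]
  · rintro (⟨h, -⟩ | ⟨h, -⟩)
    exacts [h, h.symm]
  · rintro u w ⟨h, hu⟩ ⟨_, hw⟩
    exact h.ne (hu.symm.trans ((hswap h).symm.trans hw))

theorem encard_setOf_eq_le_encard_preimage (f : G.edgeSet → V) (u : V) :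
    {w | ∃ h : G.Adj u w, f ⟨s(u, w), h⟩ = u}.encard ≤ (f ⁻¹' {u}).encard := by
  rw [← Subtype.val_injective.encard_image]
  refine Set.encard_le_encard_of_injOn (f := fun w ↦ s(u, w)) ?_ fun w _ x _ ↦ Sym2.congr_right.1
  rintro w ⟨h, hw⟩
  exact ⟨⟨s(u, w), h⟩, hw, rfl⟩

theorem ncard_edgeSet_spanningCoe {s : Set V} (H : SimpleGraph s) :
    H.spanningCoe.edgeSet.ncard = H.edgeSet.ncard := by
  rw [SimpleGraph.edgeSet_map, Set.ncard_image_of_injective _ (Function.Embedding.injective _)]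

theorem pairCount_eq_two_mul_ncard_edgeSet_induce [Fintype V] [DecidableEq V]
    [DecidableRel G.Adj] (s : Finset V) :
    pairCount G s = 2 * (G.induce (s : Set V)).edgeSet.ncard := by
  classical
  rw [← ncard_edgeSet_spanningCoe, ← SimpleGraph.coe_edgeFinset, Set.ncard_coe_finset,
    SimpleGraph.two_mul_card_edgeFinset, pairCount]
  congr! 2 with p
  simp [and_comm, and_left_comm]

theorem card_le_ncard_edgeSet_induce {F : Finset G.edgeSet} {s : Finset V}
    (hF : ∀ e ∈ F, ∀ v ∈ e.1, v ∈ s) : #F ≤ (G.induce (s : Set V)).edgeSet.ncard := by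
  rw [← ncard_edgeSet_spanningCoe, ← Set.ncard_coe_finset,
    ← Set.ncard_image_of_injective _ Subtype.val_injective]
  refine Set.ncard_le_ncard (Set.image_subset_iff.2 ?_)
    (SimpleGraph.edgeSet_map _ _ ▸ (Set.toFinite _).image _)
  rintro ⟨⟨u, v⟩, huv⟩ he
  exact (SimpleGraph.map_adj _ _ _ _).2
    ⟨⟨u, hF _ he u (Sym2.mem_mk_left u v)⟩, ⟨v, hF _ he v (Sym2.mem_mk_right u v)⟩, huv, rfl, rfl⟩

theorem exists_isOrientation_of_forall_ncard_edgeSet_induce_le {k : ℕ}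
    (h : ∀ s : Finset V, s.Nonempty → (G.induce (s : Set V)).edgeSet.ncard ≤ k * #s) :
    ∃ r, IsOrientation G r ∧ ∀ u, {w | r u w}.encard ≤ k := by
  classical
  have hall (F : Finset G.edgeSet) : #F ≤ k * #(F.biUnion fun e ↦ e.1.toFinset) := by
    obtain rfl | ⟨e, he⟩ := F.eq_empty_or_nonempty
    · simp
    have hmem : ∀ e ∈ F, ∀ v ∈ e.1, v ∈ F.biUnion fun e ↦ e.1.toFinset :=
      fun e he v hv ↦ Finset.mem_biUnion.2 ⟨e, he, Sym2.mem_toFinset.2 hv⟩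
    exact (card_le_ncard_edgeSet_induce hmem).trans (h _ ⟨_, hmem e he _ e.1.out_fst_mem⟩)
  obtain ⟨f, hf, hcard⟩ := exists_forall_mem_encard_preimage_le hall
  exact ⟨_, isOrientation_of_forall_mem fun e ↦ Sym2.mem_toFinset.1 (hf e),
    fun u ↦ (encard_setOf_eq_le_encard_preimage f u).trans (hcard u)⟩

theorem IsWeaklyPlanar.ncard_edgeSet_induce_le (hG : IsWeaklyPlanar G) {s : Finset V}
    (hs : s.Nonempty) : (G.induce (s : Set V)).edgeSet.ncard ≤ 3 * #s := by
  have : Nonempty (s : Set V) := hs.to_subtype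
  have hle := (hG.of_isContained
    ⟨(SimpleGraph.Embedding.induce (s : Set V)).toCopy⟩).ncard_edgeSet_add_two_le
  rw [Nat.card_coe_set_eq, Set.ncard_coe_finset] at hle
  lia

theorem stmt4_general {R V : Type*} [Semiring R] [LinearOrder R] [IsStrictOrderedRing R]
    [FloorSemiring R] (G : SimpleGraph V) :
    (∀ c : R, (∀ s : Finset V, s.Nonempty → ((G.induce (s : Set V)).edgeSet.ncard : R) ≤ c * #s) →
      ∃ r, IsOrientation G r ∧ ∀ u, {w | r u w}.encard ≤ ⌈c⌉₊) ∧
    (G.IsPlanar → ∃ r, IsOrientation G r ∧ ∀ u, {w | r u w}.encard ≤ 3) := by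
  refine ⟨fun c h ↦ exists_isOrientation_of_forall_ncard_edgeSet_induce_le fun s hs ↦ ?_,
    fun hG ↦ exists_isOrientation_of_forall_ncard_edgeSet_induce_le (k := 3) fun s hs ↦
      (isWeaklyPlanar_of_isPlanar hG).ncard_edgeSet_induce_le hs⟩
  have hceil : c * (#s : R) ≤ ⌈c⌉₊ * (#s : R) := by gcongr; exact Nat.le_ceil c
  exact_mod_cast (h s hs).trans hceil

/-- Every finite graph admits an orientation with maximum out-degree at most
`⌈∇₀(G)⌉` (here `c ≥ ∇₀(G)` is any rational density bound, stated via doubled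
edge counts); in particular every planar graph admits an orientation with
maximum out-degree at most 3. An orientation is a relation `r` choosing, for
each edge, exactly one of its two directions. -/
theorem stmt4 :
    (∀ (V : Type) [Fintype V] [DecidableEq V] (G : SimpleGraph V)
        [DecidableRel G.Adj] (c : ℚ), 0 ≤ c →
      (∀ s : Finset V, s.Nonempty → (pairCount G s : ℚ) ≤ 2 * c * s.card) →
      ∃ r : V → V → Prop,
        (∀ u w, G.Adj u w ↔ (r u w ∨ r w u)) ∧
        (∀ u w, r u w → ¬ r w u) ∧
        (∀ u, {w | r u w}.ncard ≤ ⌈c⌉₊)) ∧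
    (∀ (V : Type) [Fintype V] [DecidableEq V] (G : SimpleGraph V)
        [DecidableRel G.Adj], G.IsPlanar →
      ∃ r : V → V → Prop,
        (∀ u w, G.Adj u w ↔ (r u w ∨ r w u)) ∧
        (∀ u w, r u w → ¬ r w u) ∧
        (∀ u, {w | r u w}.ncard ≤ 3)) := by
  refine ⟨fun V _ _ G _ c _ h ↦ ?_, fun V _ _ G _ hG ↦ ?_⟩
  · have hdensity (s : Finset V) (hs : s.Nonempty) :
        ((G.induce (s : Set V)).edgeSet.ncard : ℚ) ≤ c * #s := by
      have := h s hs
      rw [pairCount_eq_two_mul_ncard_edgeSet_induce, Nat.cast_mul, Nat.cast_two, mul_assoc] at this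
      exact le_of_mul_le_mul_left this two_pos
    obtain ⟨r, ⟨hadj, hasymm⟩, hdeg⟩ := (stmt4_general G).1 c hdensity
    exact ⟨r, hadj, hasymm, fun u ↦ (Set.encard_le_coe_iff_finite_ncard_le.1 (hdeg u)).2⟩
  · obtain ⟨r, ⟨hadj, hasymm⟩, hdeg⟩ := (stmt4_general (R := ℚ) G).2 hG
    exact ⟨r, hadj, hasymm, fun u ↦ (Set.encard_le_coe_iff_finite_ncard_le.1 (hdeg u)).2⟩
end

section
/- Every finite triangle-free planar graph admits an orientation of its edges with maximum out-degree at most 2. -/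
/-
By Hall's theorem, `G` has an orientation with out-degrees at most `k` as soon as every finite set
of `w` vertices spans at most `k * w` edges: match each edge with one of `k` slots at one of its
endpoints. So it suffices to bound the number of edges of a triangle-free planar graph by twice the
number of vertices, and this follows from Euler's inequality `E + 2 ≤ V + F` and from double
counting: if `G` has a cycle, every face has at least four edges on its boundary, while an edge lies
on the boundary of at most two faces.

The topological facts come from continuous logarithms instead of the Jordan curve theorem. If `p`
and `q` lie in the same component of the complement of a compact set `K`, then
`(z - p) / (z - q)` has a continuous logarithm on `K`, and conversely (Eilenberg's criterion).
* Attaching an arc by both ends `a` and `b` to a connected set `B` creates a new face: otherwise the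
  logarithms of `(z - a) / (z - b)` on the complements of the arc and of `B` would glue to one on
  the complement of `{a, b}`.
* An arc cannot split one face of `B` into three: given points `p`, `q`, `r` in three faces, the
  logarithms of `(z - p) / (z - q)` on the arc and on `B` differ by a multiple of `2 * π * i` at
  each end of the arc, likewise for `(z - p) / (z - r)`, and some nontrivial product of powers of
  the two quotients has the same multiple at both ends, so that its logarithms glue.
* On a forest every nowhere zero function has a logarithm, so a forest does not separate the plane;
  hence if the boundary of some face is a forest, that face is everything and `G` is a forest.
-/

open Set Metric Topology

section Orientation

variable {V : Type*} {G : SimpleGraph V}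

theorem exists_injective_edgeSet_prod_fin (k : ℕ)
    (h : ∀ W : Finset V, (G.induce (W : Set V)).edgeSet.ncard ≤ k * W.card) :
    ∃ f : G.edgeSet → V × Fin k, Function.Injective f ∧ ∀ e, (f e).1 ∈ e.1 := by
  classical
  let slots (e : G.edgeSet) : Finset (V × Fin k) := e.1.toFinset ×ˢ Finset.univ
  have hall (S : Finset G.edgeSet) : S.card ≤ (S.biUnion slots).card := by
    let W : Finset V := S.biUnion fun e => e.1.toFinset
    have hslots : S.biUnion slots = W ×ˢ Finset.univ := by
      ext
      simp [slots, W]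
    have hS : Subtype.val '' (S : Set G.edgeSet) ⊆
        Sym2.map Subtype.val '' (G.induce (W : Set V)).edgeSet := by
      rintro _ ⟨⟨e, he⟩, heS, rfl⟩
      induction e with | h u v =>
      have hW {w : V} (hw : w ∈ s(u, v)) : w ∈ W :=
        Finset.mem_biUnion.2 ⟨_, heS, Sym2.mem_toFinset.2 hw⟩
      exact ⟨s(⟨u, hW (Sym2.mem_mk_left u v)⟩, ⟨v, hW (Sym2.mem_mk_right u v)⟩), he, rfl⟩
    calc
      S.card = (Subtype.val '' (S : Set G.edgeSet)).ncard := by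
        rw [Set.ncard_image_of_injective _ Subtype.val_injective, Set.ncard_coe_finset]
      _ ≤ (Sym2.map Subtype.val '' (G.induce (W : Set V)).edgeSet).ncard :=
        Set.ncard_le_ncard hS (Set.toFinite _)
      _ ≤ (G.induce (W : Set V)).edgeSet.ncard := Set.ncard_image_le
      _ ≤ k * W.card := h W
      _ = (S.biUnion slots).card := by
        rw [hslots, Finset.card_product, Finset.card_univ, Fintype.card_fin, mul_comm]
  obtain ⟨f, hf, hmem⟩ := (Finset.all_card_le_biUnion_card_iff_exists_injective slots).1 hall
  exact ⟨f, hf, fun e => by simpa [slots] using hmem e⟩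

theorem exists_orientation_of_ncard_edgeSet_induce_le (k : ℕ)
    (h : ∀ W : Finset V, (G.induce (W : Set V)).edgeSet.ncard ≤ k * W.card) :
    ∃ r : V → V → Prop,
      (∀ u w, G.Adj u w ↔ (r u w ∨ r w u)) ∧
      (∀ u w, r u w → ¬ r w u) ∧
      (∀ u, {w | r u w}.encard ≤ k) := by
  obtain ⟨f, hf, hmem⟩ := exists_injective_edgeSet_prod_fin k h
  have swap {u w : V} (huw : G.Adj u w) :
      (⟨s(u, w), huw⟩ : G.edgeSet) = ⟨s(w, u), huw.symm⟩ := Subtype.ext Sym2.eq_swap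
  let r (u w : V) : Prop := ∃ huw : G.Adj u w, (f ⟨s(u, w), huw⟩).1 = u
  refine ⟨r, fun u w => ⟨fun huw => ?_, ?_⟩, ?_, fun u => ?_⟩
  · rcases Sym2.mem_iff.1 (hmem ⟨s(u, w), huw⟩) with hu | hw
    · exact Or.inl ⟨huw, hu⟩
    · exact Or.inr ⟨huw.symm, swap huw ▸ hw⟩
  · rintro (⟨huw, -⟩ | ⟨hwu, -⟩)
    exacts [huw, hwu.symm]
  · rintro u w ⟨huw, hu⟩ ⟨_, hw⟩
    exact huw.ne (hu.symm.trans (swap huw ▸ hw))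
  · let slot (w : {w | r u w}) : Fin k := (f ⟨s(u, w), w.2.choose⟩).2
    have hslot : Function.Injective slot := fun w w' hww' =>
      Subtype.ext <| Sym2.congr_right.1 <| congrArg Subtype.val <|
        hf (Prod.ext (w.2.choose_spec.trans w'.2.choose_spec.symm) hww')
    simpa using ENat.card_le_card_of_injective hslot

end Orientation

section Forest

variable {V : Type*} {G : SimpleGraph V}

theorem exists_leaf_of_isAcyclic (hG : G.IsAcyclic) (hfin : G.edgeSet.Finite) (hne : G ≠ ⊥) :
    ∃ a b, G.Adj a b ∧ ∀ w, G.Adj b w → w = a := by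
  obtain ⟨u, w, huw⟩ := SimpleGraph.ne_bot_iff_exists_adj.1 hne
  have : Nonempty V := ⟨u⟩
  have : Finite G.edgeSet := hfin
  obtain ⟨b, _, p, hp, hmax⟩ := SimpleGraph.Walk.exists_isPath_forall_isPath_length_le_length G
  have hnil : ¬ p.Nil := fun h => by
    have := hmax u w huw.toWalk (SimpleGraph.Walk.IsPath.of_adj huw)
    simp [SimpleGraph.Walk.length_eq_zero_iff.2 h] at this
  refine ⟨p.snd, b, (p.adj_snd hnil).symm, fun x hbx => hG.eq_snd_of_adj_start hp hbx ?_⟩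
  by_contra hx
  simpa using hmax _ _ (p.cons hbx.symm) (hp.cons hx)

theorem ncard_edgeSet_add_one_le_of_isAcyclic [Finite V] [Nonempty V] (hG : G.IsAcyclic) :
    G.edgeSet.ncard + 1 ≤ Nat.card V := by
  classical
  cases nonempty_fintype V
  obtain ⟨T, hGT, -, hT⟩ :=
    SimpleGraph.connected_top.exists_isTree_le_of_le_of_isAcyclic (le_top (a := G)) hG
  calc
    G.edgeSet.ncard + 1 ≤ T.edgeSet.ncard + 1 := by
      gcongr
      exact Set.toFinite _
    _ = Nat.card V := by
      rw [← SimpleGraph.coe_edgeFinset, Set.ncard_coe_finset, hT.card_edgeFinset,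
        Nat.card_eq_fintype_card]

theorem four_le_ncard_edgeSet_of_not_isAcyclic (htf : G.CliqueFree 3) (hfin : G.edgeSet.Finite)
    (hG : ¬ G.IsAcyclic) : 4 ≤ G.edgeSet.ncard := by
  classical
  simp only [SimpleGraph.IsAcyclic, not_forall, not_not] at hG
  obtain ⟨v, c, hc⟩ := hG
  have hlen : c.length ≠ 3 := fun h =>
    let ⟨s, hs⟩ := SimpleGraph.is3Clique_iff_exists_cycle_length_three.2 ⟨v, c, hc, h⟩
    htf s hs
  calc
    4 ≤ c.length := by have := hc.three_le_length; omega
    _ = c.edges.toFinset.card := by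
      rw [List.toFinset_card_of_nodup hc.edges_nodup, SimpleGraph.Walk.length_edges]
    _ = (c.edges.toFinset : Set (Sym2 V)).ncard := (Set.ncard_coe_finset _).symm
    _ ≤ G.edgeSet.ncard :=
      Set.ncard_le_ncard (fun e he => c.edges_subset_edgeSet (List.mem_toFinset.1 he)) hfin

end Forest

theorem exists_eqOn_and_eqOn {X Y : Type*} {K L : Set X} {g g' : X → Y} (h : EqOn g g' (K ∩ L)) :
    ∃ G : X → Y, EqOn G g K ∧ EqOn G g' L := by
  classical
  refine ⟨K.piecewise g g', piecewise_eqOn _ _ _, fun z hz => ?_⟩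
  by_cases hzK : z ∈ K
  · rw [piecewise_eq_of_mem _ _ _ hzK, h ⟨hzK, hz⟩]
  · exact piecewise_eq_of_notMem _ _ _ hzK

section Logarithm

variable {X : Type*} [TopologicalSpace X] {K L : Set X} {f f' : X → ℂ}

/-- The function `f` has a continuous logarithm on `K`. Values off `K` are irrelevant: `f` and its
logarithm are total functions only to avoid subtypes. -/
def HasLogOn (f : X → ℂ) (K : Set X) : Prop :=
  ∃ g : X → ℂ, ContinuousOn g K ∧ ∀ z ∈ K, Complex.exp (g z) = f z

/-- Every nowhere zero continuous complex function on `K` has a continuous logarithm on `K`.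
For compact `K ⊆ ℂ` this is Eilenberg's criterion for `K` not to separate the plane. -/
def AdmitsLogs (K : Set X) : Prop :=
  ∀ f : X → ℂ, ContinuousOn f K → (∀ z ∈ K, f z ≠ 0) → HasLogOn f K

namespace HasLogOn

theorem mono (h : HasLogOn f L) (hKL : K ⊆ L) : HasLogOn f K :=
  let ⟨g, hg, hexp⟩ := h
  ⟨g, hg.mono hKL, fun z hz => hexp z (hKL hz)⟩

theorem congr (h : HasLogOn f K) (hff' : EqOn f f' K) : HasLogOn f' K :=
  let ⟨g, hg, hexp⟩ := h
  ⟨g, hg, fun z hz => (hexp z hz).trans (hff' hz)⟩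

theorem mul (h : HasLogOn f K) (h' : HasLogOn f' K) : HasLogOn (fun z => f z * f' z) K := by
  obtain ⟨g, hg, hexp⟩ := h
  obtain ⟨g', hg', hexp'⟩ := h'
  exact ⟨fun z => g z + g' z, hg.add hg', fun z hz => by
    rw [Complex.exp_add, hexp z hz, hexp' z hz]⟩

theorem of_domRestrict (h : HasLogOn (K.domRestrict f) univ) : HasLogOn f K := by
  classical
  obtain ⟨g, hg, hexp⟩ := h
  let g' (z : X) : ℂ := if hz : z ∈ K then g ⟨z, hz⟩ else 0
  have hg' : K.domRestrict g' = g := by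
    ext z
    simp [g']
  refine ⟨g', continuousOn_iff_continuous_domRestrict.2 ?_, fun z hz => ?_⟩
  · rwa [hg', ← continuousOn_univ]
  · simpa [g', hz] using hexp ⟨z, hz⟩ (mem_univ _)

theorem of_homotopy (H : unitInterval × X → ℂ) (hH : Continuous H) (hne : ∀ p, H p ≠ 0)
    (h : HasLogOn (fun x => H (0, x)) univ) : HasLogOn (fun x => H (1, x)) univ := by
  obtain ⟨g, hg, hexp⟩ := h
  let H' : C(unitInterval × X, {z : ℂ // z ≠ 0}) := ⟨fun p => ⟨H p, hne p⟩, by fun_prop⟩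
  have hstart (x : X) : H' (0, x) = ⟨Complex.exp (g x), Complex.exp_ne_zero _⟩ :=
    Subtype.ext (hexp x (mem_univ x)).symm
  let F := Complex.isCoveringMap_exp.liftHomotopy H' ⟨g, continuousOn_univ.1 hg⟩ hstart
  have hF : _ ∘ F = H' := Complex.isCoveringMap_exp.liftHomotopy_lifts H' _ hstart
  exact ⟨fun x => F (1, x), Continuous.continuousOn (by fun_prop), fun x _ =>
    congrArg Subtype.val (congrFun hF (1, x))⟩

theorem const {c : ℂ} (hc : c ≠ 0) : HasLogOn (fun _ => c) K :=
  ⟨fun _ => Complex.log c, continuousOn_const, fun _ _ => Complex.exp_log hc⟩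

theorem union_of_isClosed (hK : IsClosed K) (hL : IsClosed L) {g g' : X → ℂ}
    (hg : ContinuousOn g K) (hg' : ContinuousOn g' L) (hexp : ∀ z ∈ K, Complex.exp (g z) = f z)
    (hexp' : ∀ z ∈ L, Complex.exp (g' z) = f z) (n : ℤ)
    (hn : ∀ z ∈ K ∩ L, g z = g' z + n * (2 * Real.pi * Complex.I)) : HasLogOn f (K ∪ L) := by
  obtain ⟨G, hGK, hGL⟩ := exists_eqOn_and_eqOn hn
  refine ⟨G, ((hg.congr hGK).union_of_isClosed
    ((hg'.add continuousOn_const).congr hGL) hK hL), ?_⟩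
  rintro z (hz | hz)
  · rw [hGK hz, hexp z hz]
  · rw [hGL hz, Complex.exp_add, hexp' z hz, Complex.exp_int_mul_two_pi_mul_I, mul_one]

end HasLogOn

theorem sub_eq_sub_of_exp_eq_exp (hK : IsPreconnected K) (hf : ContinuousOn f K)
    (hf' : ContinuousOn f' K) (hexp : ∀ z ∈ K, Complex.exp (f z) = Complex.exp (f' z))
    {x y : X} (hx : x ∈ K) (hy : y ∈ K) : f x - f' x = f y - f' y := by
  have hone {z : X} (hz : z ∈ K) : Complex.exp (f z - f' z) = 1 := by
    rw [Complex.exp_sub, hexp z hz, div_self (Complex.exp_ne_zero _)]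
  exact Complex.isCoveringMap_exp.constOn_of_comp hK (hf.sub hf')
    (fun a ha b hb => Subtype.ext ((hone ha).trans (hone hb).symm)) hx hy

theorem exists_hasLogOn_zpow_mul_zpow {A B : Set X} (hA : IsClosed A) (hB : IsClosed B) {a b : X}
    (hAB : A ∩ B ⊆ {a, b}) (hfA : HasLogOn f A) (hfB : HasLogOn f B) (hfA' : HasLogOn f' A)
    (hfB' : HasLogOn f' B) :
    ∃ m n : ℤ, (m ≠ 0 ∨ n ≠ 0) ∧ HasLogOn (fun z => f z ^ m * f' z ^ n) (A ∪ B) := by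
  have exists_int {f g h : X → ℂ} (hg : ∀ z ∈ A, Complex.exp (g z) = f z)
      (hh : ∀ z ∈ B, Complex.exp (h z) = f z) :
      ∃ d : X → ℤ, ∀ z ∈ A ∩ B, g z = h z + d z * (2 * Real.pi * Complex.I) := by
    choose! d hd using fun z (hz : z ∈ A ∩ B) =>
      Complex.exp_eq_exp_iff_exists_int.1 ((hg z hz.1).trans (hh z hz.2).symm)
    exact ⟨d, hd⟩
  obtain ⟨g, hg, hexpg⟩ := hfA
  obtain ⟨h, hh, hexph⟩ := hfB
  obtain ⟨g', hg', hexpg'⟩ := hfA'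
  obtain ⟨h', hh', hexph'⟩ := hfB'
  obtain ⟨d, hd⟩ := exists_int hexpg hexph
  obtain ⟨d', hd'⟩ := exists_int hexpg' hexph'
  obtain ⟨m, n, hmn, hab⟩ : ∃ m n : ℤ,
      (m ≠ 0 ∨ n ≠ 0) ∧ m * d a + n * d' a = m * d b + n * d' b := by
    by_cases hda : d a = d b ∧ d' a = d' b
    · exact ⟨1, 0, by simp, by rw [hda.1, hda.2]⟩
    · exact ⟨d' b - d' a, d a - d b, by omega, by ring⟩
  have hconst {z : X} (hz : z ∈ A ∩ B) : m * d z + n * d' z = m * d a + n * d' a := by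
    rcases hAB hz with rfl | rfl
    exacts [rfl, hab.symm]
  refine ⟨m, n, hmn, .union_of_isClosed hA hB (g := fun z => m * g z + n * g' z)
    (g' := fun z => m * h z + n * h' z) (by fun_prop) (by fun_prop) ?_ ?_
    (m * d a + n * d' a) fun z hz => ?_⟩
  · intro z hz
    rw [Complex.exp_add, Complex.exp_int_mul, Complex.exp_int_mul, hexpg z hz, hexpg' z hz]
  · intro z hz
    rw [Complex.exp_add, Complex.exp_int_mul, Complex.exp_int_mul, hexph z hz, hexph' z hz]
  · rw [← hconst hz, hd z hz, hd' z hz]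
    push_cast
    ring

theorem exists_joinedIn_of_dense [LocallyPathConnectedSpace X] {s U : Set X} (hs : Dense s)
    (hU : IsOpen U) {x : X} (hx : x ∈ U) : ∃ y ∈ s, JoinedIn U x y :=
  let ⟨y, hy, hys⟩ := hs.inter_open_nonempty _ (hU.pathComponentIn x)
    ⟨x, mem_pathComponentIn_self hx⟩
  ⟨y, hys, hy⟩

/-- The given logarithms on `U` and `W` differ by a constant on each path component of `U ∩ W`, and
by `hjoin` every path component of `W` contains exactly one of these; so the logarithm on `W` can be
corrected by constants to agree with the one on `U`. -/
theorem HasLogOn.union_of_isOpen [LocallyPathConnectedSpace X] {U W : Set X} (hU : IsOpen U)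
    (hW : IsOpen W) (hdense : Dense U)
    (hjoin : ∀ x ∈ U ∩ W, ∀ y ∈ U ∩ W, JoinedIn W x y → JoinedIn (U ∩ W) x y)
    (hfU : HasLogOn f U) (hfW : HasLogOn f W) : HasLogOn f (U ∪ W) := by
  obtain ⟨g, hg, hexp⟩ := hfU
  obtain ⟨h, hh, hexph⟩ := hfW
  choose! w hwU hw using fun x (hx : x ∈ W) => exists_joinedIn_of_dense hdense hW hx
  have hwW {x : X} (hx : x ∈ W) : w x ∈ U ∩ W := ⟨hwU x hx, (hw x hx).target_mem⟩
  have hsub {x y : X} (hx : x ∈ U ∩ W) (hy : y ∈ U ∩ W) (hxy : JoinedIn W x y) :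
      g x - h x = g y - h y := by
    obtain ⟨γ, hγ⟩ := hjoin x hx y hy hxy
    have hγ' : range γ ⊆ U ∩ W := range_subset_iff.2 hγ
    exact sub_eq_sub_of_exp_eq_exp (isPreconnected_range γ.continuous)
      (hg.mono fun z hz => (hγ' hz).1) (hh.mono fun z hz => (hγ' hz).2)
      (fun z hz => (hexp z (hγ' hz).1).trans (hexph z (hγ' hz).2).symm) γ.source_mem_range
      γ.target_mem_range
  let k (x : X) : ℂ := h x + (g (w x) - h (w x))
  have hk_cont : ContinuousOn k W := fun x hx => by
    have hk : k =ᶠ[𝓝 x] fun y => h y + (g (w x) - h (w x)) := by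
      filter_upwards [(hW.pathComponentIn x).mem_nhds (mem_pathComponentIn_self hx)] with y hy
      have hyW : y ∈ W := hy.target_mem
      rw [hsub (hwW hx) (hwW hyW) (((hw x hx).symm.trans hy).trans (hw y hyW))]
    exact (((hh.continuousAt (hW.mem_nhds hx)).add continuousAt_const).congr
      hk.symm).continuousWithinAt
  have hk_exp : ∀ x ∈ W, Complex.exp (k x) = f x := fun x hx => by
    rw [Complex.exp_add, Complex.exp_sub, hexp _ (hwW hx).1, hexph _ (hwW hx).2, hexph x hx,
      ← hexph _ (hwW hx).2, div_self (Complex.exp_ne_zero _), mul_one]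
  have hgk : EqOn g k (U ∩ W) := fun x hx => by
    rw [← add_sub_cancel (h x) (g x), hsub hx (hwW hx.2) (hw x hx.2)]
  obtain ⟨G, hGU, hGW⟩ := exists_eqOn_and_eqOn hgk
  refine ⟨G, (hg.congr hGU).union_of_isOpen (hk_cont.congr hGW) hU hW, ?_⟩
  rintro x (hx | hx)
  · rw [hGU hx, hexp x hx]
  · rw [hGW hx, hk_exp x hx]

theorem AdmitsLogs.of_contractibleSpace [ContractibleSpace K] : AdmitsLogs K := by
  intro f hf hne
  obtain ⟨x, ⟨H⟩⟩ := id_nullhomotopic K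
  have hfK : Continuous (K.domRestrict f) := continuousOn_iff_continuous_domRestrict.1 hf
  have h := HasLogOn.of_homotopy (fun p => K.domRestrict f (H.symm p)) (by fun_prop)
    (fun p => hne _ (H.symm p).2) (by simpa using HasLogOn.const (hne x x.2))
  exact .of_domRestrict (h.congr fun z _ => by simp)

theorem AdmitsLogs.union (hK : IsClosed K) (hL : IsClosed L) (hKL : (K ∩ L).Subsingleton)
    (lK : AdmitsLogs K) (lL : AdmitsLogs L) : AdmitsLogs (K ∪ L) := by
  intro f hf hne
  obtain ⟨g, hg, hexp⟩ := lK f (hf.mono subset_union_left) fun z hz => hne z (Or.inl hz)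
  obtain ⟨g', hg', hexp'⟩ := lL f (hf.mono subset_union_right) fun z hz => hne z (Or.inr hz)
  rcases hKL.eq_empty_or_singleton with hempty | ⟨x, hx⟩
  · exact .union_of_isClosed hK hL hg hg' hexp hexp' 0 (by simp [hempty])
  · have hxKL : x ∈ K ∩ L := hx ▸ mem_singleton x
    obtain ⟨n, hn⟩ := Complex.exp_eq_exp_iff_exists_int.1
      ((hexp x hxKL.1).trans (hexp' x hxKL.2).symm)
    exact .union_of_isClosed hK hL hg hg' hexp hexp' n (by simpa [hx] using hn)

theorem AdmitsLogs.union_finite [T1Space X] (hK : IsClosed K) (lK : AdmitsLogs K) {s : Set X}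
    (hs : s.Finite) : AdmitsLogs (K ∪ s) := by
  induction s, hs using Set.Finite.induction_on with
  | empty => simpa using lK
  | @insert x s _ hs ih =>
    rw [insert_eq, union_left_comm]
    exact AdmitsLogs.union isClosed_singleton (hK.union hs.isClosed)
      (subsingleton_singleton.anti inter_subset_left) .of_contractibleSpace ih

end Logarithm

section ComplexLogarithm

theorem hasLogOn_div_of_joinedIn {K : Set ℂ} {p q : ℂ} (h : JoinedIn Kᶜ p q) :
    HasLogOn (fun z => (z - p) / (z - q)) K := by
  obtain ⟨γ, hγ⟩ := h.symm
  have hne (t : unitInterval) (z : K) : (z : ℂ) - γ t ≠ 0 :=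
    sub_ne_zero.2 fun hz => hγ t (hz ▸ z.2)
  have hneq (z : K) : (z : ℂ) - q ≠ 0 := by simpa using hne 0 z
  have hlog := HasLogOn.of_homotopy (fun x : unitInterval × K => (x.2 - γ x.1) / (x.2 - q))
    (Continuous.div (by fun_prop) (by fun_prop) fun x => hneq x.2)
    (fun x => div_ne_zero (hne x.1 x.2) (hneq x.2))
    ((HasLogOn.const one_ne_zero).congr fun z _ => by simp [hneq z])
  exact .of_domRestrict (hlog.congr fun z _ => by simp)

theorem eq_zero_of_hasLogOn_sphere {p : ℂ} {r : ℝ} (hr : 0 < r) {n : ℤ}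
    (h : HasLogOn (fun z => (z - p) ^ n) (sphere p r)) : n = 0 := by
  obtain ⟨g, hg, hexp⟩ := h
  have hcircle (θ : ℝ) : circleMap p r θ ∈ sphere p r := circleMap_mem_sphere p hr.le θ
  let u (θ : ℝ) : ℂ := g (circleMap p r θ)
  let v (θ : ℝ) : ℂ := n * (Complex.log r + θ * Complex.I)
  have hu : Continuous u := hg.comp_continuous (continuous_circleMap p r) hcircle
  have huv (θ : ℝ) : Complex.exp (u θ) = Complex.exp (v θ) := by
    simp only [u, v, hexp _ (hcircle θ), Complex.exp_int_mul, Complex.exp_add,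
      Complex.exp_log (Complex.ofReal_ne_zero.2 hr.ne'), circleMap_sub_center, circleMap_zero]
  have hperiod : u 0 - v 0 = u (2 * Real.pi) - v (2 * Real.pi) :=
    sub_eq_sub_of_exp_eq_exp isPreconnected_univ hu.continuousOn
      (Continuous.continuousOn (by fun_prop)) (fun θ _ => huv θ) (mem_univ _) (mem_univ _)
  have hn : (n : ℂ) * (2 * Real.pi * Complex.I) = 0 := by
    have hu0 : u (2 * Real.pi) = u 0 := by simp [u, circleMap]
    simp only [hu0, v, Complex.ofReal_mul, Complex.ofReal_ofNat, Complex.ofReal_zero] at hperiod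
    linear_combination hperiod
  exact_mod_cast (mul_eq_zero.1 hn).resolve_right Complex.two_pi_I_ne_zero

theorem not_hasLogOn_compl_pair {a b : ℂ} (hab : a ≠ b) :
    ¬ HasLogOn (fun z => (z - a) / (z - b)) {a, b}ᶜ := by
  intro h
  let r := dist a b / 2
  have hr : 0 < r := half_pos (dist_pos.2 hab)
  have hball : AdmitsLogs (closedBall a r) :=
    have := (convex_closedBall a r).contractibleSpace ⟨a, mem_closedBall_self hr.le⟩
    .of_contractibleSpace
  have hb : b ∉ closedBall a r := by
    rw [mem_closedBall, dist_comm, not_le]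
    exact half_lt_self (dist_pos.2 hab)
  have hsub (z : ℂ) (hz : z ∈ closedBall a r) : z - b ≠ 0 := sub_ne_zero.2 fun hzb => hb (hzb ▸ hz)
  have hsphere : sphere a r ⊆ {a, b}ᶜ := by
    rintro z hz (rfl | rfl)
    · exact hr.ne (dist_self z ▸ hz)
    · exact hb (sphere_subset_closedBall hz)
  have hlog : HasLogOn (fun z => (z - a) ^ (1 : ℤ)) (sphere a r) :=
    ((h.mono hsphere).mul ((hball _ (by fun_prop) hsub).mono sphere_subset_closedBall)).congr
      fun z hz => by
        simp only [zpow_one]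
        exact div_mul_cancel₀ _ (hsub z (sphere_subset_closedBall hz))
  exact one_ne_zero (eq_zero_of_hasLogOn_sphere hr hlog)

end ComplexLogarithm

section Separation

theorem closure_pathComponentIn_compl_diff_subset {X : Type*} [TopologicalSpace X]
    [LocallyPathConnectedSpace X] {K : Set X} (hK : IsClosed K) (x : X) :
    closure (pathComponentIn Kᶜ x) \ K ⊆ pathComponentIn Kᶜ x := by
  rintro y ⟨hy, hyK⟩
  obtain ⟨z, hyz, hxz⟩ := mem_closure_iff.1 hy _ (hK.isOpen_compl.pathComponentIn y)
    (mem_pathComponentIn_self hyK)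
  exact hxz.trans hyz.symm

theorem isPathConnected_setOf_lt_norm {E : Type*} [NormedAddCommGroup E] [NormedSpace ℝ E]
    (hE : 1 < Module.rank ℝ E) {R : ℝ} (hR : 0 ≤ R) : IsPathConnected {x : E | R < ‖x‖} := by
  have himage : {x : E | R < ‖x‖} = (fun y : ℝ × E => y.1 • y.2) '' Ioi R ×ˢ sphere 0 1 := by
    ext x
    refine ⟨fun hx => ⟨(‖x‖, ‖x‖⁻¹ • x), ⟨hx, ?_⟩, ?_⟩, ?_⟩
    · simp [norm_smul, (hR.trans_lt hx).ne']
    · simp [smul_smul, (hR.trans_lt hx).ne']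
    · rintro ⟨⟨t, y⟩, ⟨ht, hy⟩, rfl⟩
      have hty : ‖t • y‖ = t := by
        rw [norm_smul, mem_sphere_zero_iff_norm.1 hy, mul_one, Real.norm_eq_abs,
          abs_of_pos (hR.trans_lt ht)]
      exact ht.trans_eq hty.symm
  rw [himage]
  exact (((convex_Ioi R).isPathConnected nonempty_Ioi).prod
    (isPathConnected_sphere hE 0 zero_le_one)).image (by fun_prop)

theorem joinedIn_compl_of_not_isBounded {E : Type*} [NormedAddCommGroup E] [NormedSpace ℝ E]
    (hE : 1 < Module.rank ℝ E) {K : Set E} (hK : Bornology.IsBounded K) {x y : E}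
    (hx : ¬ Bornology.IsBounded (pathComponentIn Kᶜ x))
    (hy : ¬ Bornology.IsBounded (pathComponentIn Kᶜ y)) : JoinedIn Kᶜ x y := by
  obtain ⟨R, hR, hKR⟩ := hK.subset_closedBall_lt 0 0
  have hfar : {z : E | R < ‖z‖} ⊆ Kᶜ := fun z hz hzK =>
    hz.not_ge (mem_closedBall_zero_iff.1 (hKR hzK))
  have exists_far {x : E} (hx : ¬ Bornology.IsBounded (pathComponentIn Kᶜ x)) :
      ∃ z, R < ‖z‖ ∧ JoinedIn Kᶜ x z := by
    by_contra! h
    exact hx (isBounded_closedBall.subset fun z hz =>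
      mem_closedBall_zero_iff.2 (not_lt.1 fun hz' => h z hz' hz))
  obtain ⟨z, hz, hxz⟩ := exists_far hx
  obtain ⟨w, hw, hyw⟩ := exists_far hy
  exact (hxz.trans (((isPathConnected_setOf_lt_norm hE hR.le).joinedIn z hz w hw).mono hfar)).trans
    hyw.symm

theorem eq_zero_of_hasLogOn_zpow_mul {K : Set ℂ} (hK : IsCompact K) {p : ℂ} (hp : p ∉ K)
    (hb : Bornology.IsBounded (pathComponentIn Kᶜ p)) {h : ℂ → ℂ}
    (hh : ContinuousOn h (closure (pathComponentIn Kᶜ p)))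
    (hne : ∀ z ∈ closure (pathComponentIn Kᶜ p), h z ≠ 0) {n : ℤ}
    (hlog : HasLogOn (fun z => (z - p) ^ n * h z) K) : n = 0 := by
  classical
  obtain ⟨g, hg, hexp⟩ := hlog
  obtain ⟨G, hG⟩ := ContinuousMap.exists_restrict_eq hK.isClosed
    ⟨K.domRestrict g, continuousOn_iff_continuous_domRestrict.1 hg⟩
  have hGg (z : ℂ) (hz : z ∈ K) : G z = g z := congrArg (fun F => F ⟨z, hz⟩) hG
  let U := pathComponentIn Kᶜ p
  have hU : IsOpen U := hK.isClosed.isOpen_compl.pathComponentIn p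
  have hpU (z : ℂ) (hz : z ∈ Uᶜ) : z - p ≠ 0 :=
    sub_ne_zero.2 fun hzp => hz (hzp ▸ mem_pathComponentIn_self hp)
  -- If `n ≠ 0`, this would extend `(z - p) ^ n` from `Uᶜ` to the plane without zeros.
  let H : ℂ → ℂ := U.piecewise (fun z => Complex.exp (G z) / h z) fun z => (z - p) ^ n
  have hHU (z : ℂ) (hz : z ∈ Uᶜ) : H z = (z - p) ^ n := piecewise_eq_of_notMem _ _ _ hz
  have hH : Continuous H := by
    refine continuous_piecewise (fun z hz => ?_) (ContinuousOn.div (by fun_prop) hh hne) ?_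
    · rw [hU.frontier_eq] at hz
      have hzK : z ∈ K := by_contra fun hzK =>
        hz.2 (closure_pathComponentIn_compl_diff_subset hK.isClosed p ⟨hz.1, hzK⟩)
      rw [hGg z hzK, hexp z hzK, mul_div_cancel_right₀ _ (hne z hz.1)]
    · rw [hU.isClosed_compl.closure_eq]
      exact ContinuousOn.zpow₀ (by fun_prop) n fun z hz => .inl (hpU z hz)
  have hHne (z : ℂ) (_ : z ∈ univ) : H z ≠ 0 := by
    by_cases hz : z ∈ U
    · rw [show H z = _ from piecewise_eq_of_mem _ _ _ hz]
      exact div_ne_zero (Complex.exp_ne_zero _) (hne z (subset_closure hz))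
    · rw [hHU z hz]
      exact zpow_ne_zero _ (hpU z hz)
  obtain ⟨R, hR, hUR⟩ := hb.subset_ball_lt 0 p
  have huniv : AdmitsLogs (univ : Set ℂ) :=
    have := (Homeomorph.Set.univ ℂ).contractibleSpace
    .of_contractibleSpace
  exact eq_zero_of_hasLogOn_sphere hR (((huniv H hH.continuousOn hHne).mono
    (subset_univ _)).congr fun z hz => hHU z fun hzU => (mem_ball.1 (hUR hzU)).ne hz)

/-- The points `p i` lie in distinct components of the complement of `K`. As `p` is not required to
meet every component, this lets us count components without knowing that there are finitely many. -/
def Separates {X ι : Type*} [TopologicalSpace X] (K : Set X) (p : ι → X) : Prop :=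
  ∀ i j, JoinedIn Kᶜ (p i) (p j) ↔ i = j

theorem Separates.notMem {X ι : Type*} [TopologicalSpace X] {K : Set X} {p : ι → X}
    (h : Separates K p) (i : ι) : p i ∉ K :=
  ((h i i).2 rfl).source_mem

theorem Separates.comp_injective {X ι κ : Type*} [TopologicalSpace X] {K : Set X} {p : ι → X}
    (h : Separates K p) {f : κ → ι} (hf : Function.Injective f) : Separates K (p ∘ f) :=
  fun i j => (h (f i) (f j)).trans hf.eq_iff

theorem Separates.eq_zero_of_hasLogOn {K : Set ℂ} (hK : IsCompact K) {ι : Type*} [Fintype ι]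
    {p : ι → ℂ} (hp : Separates K p) {n : ι → ℤ} (hsum : ∑ i, n i = 0)
    (hlog : HasLogOn (fun z => ∏ i, (z - p i) ^ n i) K) (i : ι) : n i = 0 := by
  classical
  have hbounded (i : ι) (hi : Bornology.IsBounded (pathComponentIn Kᶜ (p i))) : n i = 0 := by
    have hne (z : ℂ) (hz : z ∈ closure (pathComponentIn Kᶜ (p i))) (j : ι)
        (hj : j ∈ Finset.univ.erase i) : z - p j ≠ 0 := sub_ne_zero.2 fun hzj =>
      Finset.ne_of_mem_erase hj ((hp i j).1 (closure_pathComponentIn_compl_diff_subset hK.isClosed _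
        ⟨hzj ▸ hz, hp.notMem j⟩)).symm
    exact eq_zero_of_hasLogOn_zpow_mul hK (hp.notMem i) hi
      (continuousOn_finsetProd _ fun j hj =>
        ContinuousOn.zpow₀ (by fun_prop) (n j) fun z hz => .inl (hne z hz j hj))
      (fun z hz => Finset.prod_ne_zero_iff.2 fun j hj => zpow_ne_zero _ (hne z hz j hj))
      (hlog.congr fun z _ => (Finset.mul_prod_erase _ _ (Finset.mem_univ i)).symm)
  by_cases hi : Bornology.IsBounded (pathComponentIn Kᶜ (p i))
  · exact hbounded i hi
  · rw [← hsum, Finset.sum_eq_single_of_mem i (Finset.mem_univ i)]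
    intro j _ hji
    refine hbounded j (by_contra fun hj => hji ?_)
    exact (hp j i).1 (joinedIn_compl_of_not_isBounded (by simp) hK.isBounded hj hi)

theorem AdmitsLogs.joinedIn_compl {K : Set ℂ} (hK : IsCompact K) (lK : AdmitsLogs K) {p q : ℂ}
    (hp : p ∉ K) (hq : q ∉ K) : JoinedIn Kᶜ p q := by
  by_contra hpq
  have hsep : Separates K ![p, q] := by
    have hqp : ¬ JoinedIn Kᶜ q p := fun h => hpq h.symm
    intro i j
    fin_cases i <;> fin_cases j <;>
      simp [hpq, hqp, JoinedIn.refl (mem_compl hp), JoinedIn.refl (mem_compl hq)]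
  have hne {p : ℂ} (hp : p ∉ K) (z : ℂ) (hz : z ∈ K) : z - p ≠ 0 :=
    sub_ne_zero.2 fun hzp => hp (hzp ▸ hz)
  have hlog : HasLogOn (fun z => ∏ i, (z - ![p, q] i) ^ ![(1 : ℤ), -1] i) K :=
    (lK (fun z => (z - p) / (z - q)) (ContinuousOn.div (by fun_prop) (by fun_prop) (hne hq))
      fun z hz => div_ne_zero (hne hp z hz) (hne hq z hz)).congr
      fun z _ => by simp [div_eq_mul_inv]
  exact one_ne_zero (hsep.eq_zero_of_hasLogOn hK (by simp) hlog 0)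

theorem Separates.not_joinedIn_of_union {A B : Set ℂ} (hA : IsCompact A) (hB : IsCompact B)
    (lA : AdmitsLogs A) {a b : ℂ} (hAB : A ∩ B ⊆ {a, b}) {p : Fin 3 → ℂ}
    (hp : Separates (A ∪ B) p) : ¬ (JoinedIn Bᶜ (p 0) (p 1) ∧ JoinedIn Bᶜ (p 0) (p 2)) := by
  rintro ⟨h₁, h₂⟩
  have hne (i : Fin 3) (z : ℂ) (hz : z ∈ A ∪ B) : z - p i ≠ 0 :=
    sub_ne_zero.2 fun hzp => hp.notMem i (hzp ▸ hz)
  have hlogA (i : Fin 3) : HasLogOn (fun z => (z - p 0) / (z - p i)) A :=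
    lA _ (ContinuousOn.div (by fun_prop) (by fun_prop) fun z hz => hne i z (.inl hz))
      fun z hz => div_ne_zero (hne 0 z (.inl hz)) (hne i z (.inl hz))
  obtain ⟨m, n, hmn, hlog⟩ := exists_hasLogOn_zpow_mul_zpow hA.isClosed hB.isClosed hAB (hlogA 1)
    (hasLogOn_div_of_joinedIn h₁) (hlogA 2) (hasLogOn_div_of_joinedIn h₂)
  have hzero := hp.eq_zero_of_hasLogOn (hA.union hB) (n := ![m + n, -m, -n])
    (by simp [Fin.sum_univ_three]) <| hlog.congr fun z hz => by
      simp [Fin.prod_univ_three, div_zpow, zpow_add₀ (hne 0 z hz)]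
      ring
  rcases hmn with hm | hn
  · exact hm (neg_eq_zero.1 (hzero 1))
  · exact hn (neg_eq_zero.1 (hzero 2))

end Separation

section Arc

variable {X : Type*} [TopologicalSpace X] {A : Set X} {a b : X}

/-- The set `A` is a simple arc from `a` to `b`. -/
def IsArc (A : Set X) (a b : X) : Prop :=
  ∃ γ : Path a b, Function.Injective γ ∧ range γ = A

theorem not_injective_of_continuous_sphere {E : Type*} [NormedAddCommGroup E] [NormedSpace ℝ E]
    (hE : 1 < Module.rank ℝ E) {f : sphere (0 : E) 1 → ℝ} (hf : Continuous f) :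
    ¬ Function.Injective f := by
  intro hinj
  have : PreconnectedSpace (sphere (0 : E) 1) :=
    Subtype.preconnectedSpace (isPreconnected_sphere hE 0 1)
  obtain ⟨x₀, hx₀⟩ := (isPathConnected_sphere hE 0 zero_le_one).nonempty
  obtain ⟨x, hx⟩ : ∃ x, f x ≤ f (-x) := by
    rcases le_total (f ⟨x₀, hx₀⟩) (f (-⟨x₀, hx₀⟩)) with h | h
    · exact ⟨_, h⟩
    · exact ⟨-⟨x₀, hx₀⟩, by rwa [neg_neg]⟩
  obtain ⟨y, hy⟩ : ∃ y, f y = f (-y) :=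
    intermediate_value_univ₂ hf (hf.comp continuous_neg) hx (by rwa [neg_neg])
  exact ne_neg_of_mem_unit_sphere ℝ y (hinj hy)

namespace IsArc

theorem ne (h : IsArc A a b) : a ≠ b := by
  obtain ⟨γ, hγ, -⟩ := h
  intro hab
  exact zero_ne_one (hγ (by rw [γ.source, γ.target, hab]))

theorem joinedIn (h : IsArc A a b) : JoinedIn A a b := by
  obtain ⟨γ, -, rfl⟩ := h
  exact ⟨γ, mem_range_self⟩

theorem isCompact (h : IsArc A a b) : IsCompact A := by
  obtain ⟨γ, -, rfl⟩ := h
  exact isCompact_range γ.continuous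

theorem nonempty_homeomorph [T2Space X] (h : IsArc A a b) : Nonempty (A ≃ₜ unitInterval) := by
  obtain ⟨γ, hγ, rfl⟩ := h
  exact ⟨(γ.continuous.isClosedEmbedding hγ).isEmbedding.toHomeomorph.symm⟩

theorem admitsLogs [T2Space X] (h : IsArc A a b) : AdmitsLogs A := by
  obtain ⟨φ⟩ := h.nonempty_homeomorph
  have : ContractibleSpace unitInterval :=
    (convex_Icc 0 1).contractibleSpace ⟨0, unitInterval.zero_mem⟩
  have := φ.contractibleSpace
  exact .of_contractibleSpace

theorem image {Y : Type*} [TopologicalSpace Y] {f : X → Y} (h : IsArc A a b) (hf : Continuous f)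
    (hinj : Function.Injective f) : IsArc (f '' A) (f a) (f b) := by
  obtain ⟨γ, hγ, rfl⟩ := h
  exact ⟨γ.map hf, hinj.comp hγ, range_comp f γ⟩

theorem isPathConnected_diff (h : IsArc A a b) : IsPathConnected (A \ {a, b}) := by
  obtain ⟨γ, hγ, rfl⟩ := h
  have himage : range γ \ {a, b} = γ.extend '' Ioo 0 1 := by
    ext x
    constructor
    · rintro ⟨⟨t, rfl⟩, ht⟩
      have h0 : t ≠ 0 := by
        rintro rfl
        exact ht (.inl γ.source)
      have h1 : t ≠ 1 := by
        rintro rfl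
        exact ht (.inr γ.target)
      exact ⟨t, ⟨unitInterval.pos_iff_ne_zero.2 h0, unitInterval.lt_one_iff_ne_one.2 h1⟩,
        γ.extend_apply t.2⟩
    · rintro ⟨t, ht, rfl⟩
      rw [γ.extend_apply (Ioo_subset_Icc_self ht)]
      refine ⟨mem_range_self _, ?_⟩
      rintro (h | h)
      · exact ht.1.ne' (congrArg Subtype.val (hγ (h.trans γ.source.symm)))
      · exact ht.2.ne (congrArg Subtype.val (hγ (h.trans γ.target.symm)))
  rw [himage]
  exact ((convex_Ioo 0 1).isPathConnected (nonempty_Ioo.2 zero_lt_one)).image γ.continuous_extend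

theorem dense_compl {E : Type*} [NormedAddCommGroup E] [NormedSpace ℝ E]
    (hE : 1 < Module.rank ℝ E) {A : Set E} {a b : E} (h : IsArc A a b) : Dense Aᶜ := by
  obtain ⟨φ⟩ := h.nonempty_homeomorph
  rw [← interior_eq_empty_iff_dense_compl, eq_empty_iff_forall_notMem]
  intro x hx
  obtain ⟨r, hr, hrA⟩ := nhds_basis_closedBall.mem_iff.1 (mem_interior_iff_mem_nhds.1 hx)
  have hmem (y : sphere (0 : E) 1) : x + r • (y : E) ∈ A :=
    hrA (by simp [norm_smul, abs_of_pos hr])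
  refine not_injective_of_continuous_sphere hE
    (f := fun y => φ ⟨x + r • (y : E), hmem y⟩) (by fun_prop) fun y z hyz => ?_
  simpa [hr.ne', SetCoe.ext_iff] using hyz

theorem exists_joinedIn_and_not_joinedIn {A B : Set ℂ} {a b : ℂ} (hA : IsArc A a b)
    (hB : IsClosed B) (hAB : A ∩ B ⊆ {a, b}) (hjoin : JoinedIn B a b) :
    ∃ x ∈ (A ∪ B)ᶜ, ∃ y ∈ (A ∪ B)ᶜ, JoinedIn Bᶜ x y ∧ ¬ JoinedIn (A ∪ B)ᶜ x y := by
  by_contra! h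
  rw [compl_union] at h
  refine not_hasLogOn_compl_pair hA.ne (HasLogOn.mono ?_ (compl_subset_compl.2 hAB))
  rw [compl_inter]
  refine .union_of_isOpen hA.isCompact.isClosed.isOpen_compl hB.isOpen_compl
    (hA.dense_compl (by simp)) h ?_ ?_
  all_goals
    apply hasLogOn_div_of_joinedIn
    rw [compl_compl]
  exacts [hA.joinedIn, hjoin]

end IsArc

theorem Separates.cons {K : Set X} {n : ℕ} {p : Fin n → X} (h : Separates K p) {x : X}
    (hx : x ∉ K) (hxp : ∀ i, ¬ JoinedIn Kᶜ x (p i)) :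
    Separates K (Fin.cons x p : Fin (n + 1) → X) := by
  have hpx (i : Fin n) : ¬ JoinedIn Kᶜ (p i) x := fun hi => hxp i hi.symm
  intro i j
  cases i using Fin.cases <;> cases j using Fin.cases <;>
    simp [JoinedIn.refl (mem_compl hx), hxp, hpx, h _ _, (Fin.succ_ne_zero _).symm]

theorem Separates.exists_union_left [LocallyPathConnectedSpace X] {ι : Type*} {B : Set X}
    (hA : Dense Aᶜ) (hB : IsClosed B) {p : ι → X} (hp : Separates B p) :
    ∃ q : ι → X, Separates (A ∪ B) q ∧ ∀ i, JoinedIn Bᶜ (p i) (q i) := by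
  choose q hqA hq using fun i => exists_joinedIn_of_dense hA hB.isOpen_compl (hp.notMem i)
  refine ⟨q, fun i j => ⟨fun h => ?_, ?_⟩, hq⟩
  · have hB : JoinedIn Bᶜ (q i) (q j) := h.mono (compl_subset_compl.2 subset_union_right)
    exact (hp i j).1 (((hq i).trans hB).trans (hq j).symm)
  · rintro rfl
    exact JoinedIn.refl fun h => h.elim (hqA i) (hq i).target_mem

theorem IsArc.exists_separates_union {A B : Set ℂ} {a b : ℂ} (hA : IsArc A a b)
    (hB : IsClosed B) (hAB : A ∩ B ⊆ {a, b}) (hjoin : JoinedIn B a b) {n : ℕ} {p : Fin n → ℂ}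
    (hp : Separates B p) : ∃ q : Fin (n + 1) → ℂ, Separates (A ∪ B) q := by
  obtain ⟨q, hq, hpq⟩ := hp.exists_union_left (hA.dense_compl (by simp)) hB
  obtain ⟨x, hx, y, hy, hxy, hnxy⟩ := hA.exists_joinedIn_and_not_joinedIn hB hAB hjoin
  have hmono {x y : ℂ} (h : JoinedIn (A ∪ B)ᶜ x y) : JoinedIn Bᶜ x y :=
    h.mono (compl_subset_compl.2 subset_union_right)
  obtain ⟨z, hz, hzq⟩ : ∃ z ∉ A ∪ B, ∀ i, ¬ JoinedIn (A ∪ B)ᶜ z (q i) := by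
    by_contra! h
    obtain ⟨i, hi⟩ := h x hx
    obtain ⟨j, hj⟩ := h y hy
    have hij : i = j := (hp i j).1 <|
      (((hpq i).trans (hmono hi).symm).trans hxy).trans ((hmono hj).trans (hpq j).symm)
    exact hnxy (hi.trans (hij ▸ hj.symm))
  exact ⟨_, hq.cons hz hzq⟩

end Arc

namespace PlanarEmbedding

variable {V W : Type*} {G F : SimpleGraph V} {H : SimpleGraph W} (P : PlanarEmbedding G)
  {e e' : Sym2 V} {S : Set (Sym2 V)} {u v w : V} {z : ℂ}

/-- The drawing of `H` obtained by embedding `H` in a graph that is already drawn. -/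
def comap (f : H →g G) (hf : Function.Injective f) : PlanarEmbedding H where
  vtx := P.vtx ∘ f
  vtx_inj := P.vtx_inj.comp hf
  arc u v h := P.arc (f u) (f v) (f.map_adj h)
  arc_symm _ _ _ := P.arc_symm _ _ _
  arc_curve _ _ _ := P.arc_curve _ _ _
  arc_vtx _ _ _ _ hw := (P.arc_vtx _ _ _ _ hw).imp (@hf _ _) (@hf _ _)
  arc_disjoint _ _ _ _ _ _ hne := P.arc_disjoint _ _ _ _ _ _ fun heq =>
    hne (Sym2.map.injective hf heq)

/-- The point of the complex plane representing a vertex. The drawing is transported from `ℝ × ℝ`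
to `ℂ`, where complex logarithms are available. -/
noncomputable def point (v : V) : ℂ :=
  Complex.equivRealProdCLM.symm (P.vtx v)

/-- The arc in the complex plane representing an edge; it is empty if `e` is not an edge of `G`. -/
def edgeArc (e : Sym2 V) : Set ℂ :=
  {z | ∃ u v, ∃ h : G.Adj u v, s(u, v) = e ∧ z ∈ Complex.equivRealProdCLM.symm '' P.arc u v h}

/-- The part of the plane covered by a set of edges. Vertices on none of these edges are not
included, so that the trace of a forest is again put together by attaching arcs at single points. -/
def trace (S : Set (Sym2 V)) : Set ℂ :=
  ⋃ e ∈ S, P.edgeArc e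

/-- The arc representing an edge, without its endpoints. -/
def openArc (e : Sym2 V) : Set ℂ :=
  P.edgeArc e \ range P.point

/-- The graph formed by the edges on the boundary of the face of the drawing that contains `x`. -/
def faceBoundary (x : ℂ) : SimpleGraph V :=
  .fromEdgeSet {e | (P.openArc e ∩ closure (pathComponentIn (P.trace G.edgeSet)ᶜ x)).Nonempty}

theorem edgeArc_eq_image (h : G.Adj u v) :
    P.edgeArc s(u, v) = Complex.equivRealProdCLM.symm '' P.arc u v h := by
  ext z
  refine ⟨?_, fun hz => ⟨u, v, h, rfl, hz⟩⟩
  rintro ⟨u', v', h', he, hz⟩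
  rcases Sym2.eq_iff.1 he with ⟨rfl, rfl⟩ | ⟨rfl, rfl⟩
  · exact hz
  · rwa [P.arc_symm]

theorem isArc_edgeArc (h : G.Adj u v) : IsArc (P.edgeArc s(u, v)) (P.point u) (P.point v) := by
  obtain ⟨φ, hφ, hinj, h0, h1, hrange⟩ := P.arc_curve u v h
  have harc : IsArc (P.arc u v h) (P.vtx u) (P.vtx v) := ⟨⟨⟨φ, hφ⟩, h0, h1⟩, hinj, hrange⟩
  rw [P.edgeArc_eq_image h]
  exact harc.image Complex.equivRealProdCLM.symm.continuous Complex.equivRealProdCLM.symm.injective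

theorem mem_edgeSet_of_mem_edgeArc (hz : z ∈ P.edgeArc e) : e ∈ G.edgeSet := by
  obtain ⟨u, v, h, rfl, -⟩ := hz
  exact h

theorem isCompact_edgeArc (e : Sym2 V) : IsCompact (P.edgeArc e) := by
  rcases (P.edgeArc e).eq_empty_or_nonempty with hempty | ⟨z, u, v, h, rfl, -⟩
  · rw [hempty]
    exact isCompact_empty
  · exact (P.isArc_edgeArc h).isCompact

theorem admitsLogs_edgeArc (h : G.Adj u v) : AdmitsLogs (P.edgeArc s(u, v)) :=
  (P.isArc_edgeArc h).admitsLogs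

theorem mem_of_point_mem_edgeArc (h : P.point w ∈ P.edgeArc e) : w ∈ e := by
  obtain ⟨u, v, huv, rfl, x, hx, hxw⟩ := h
  obtain rfl := Complex.equivRealProdCLM.symm.injective hxw
  exact Sym2.mem_iff.2 (P.arc_vtx u v huv w hx)

theorem edgeArc_inter_subset (hne : e ≠ e') : P.edgeArc e ∩ P.edgeArc e' ⊆ range P.point := by
  rintro _ ⟨⟨u, v, h, rfl, x, hx, rfl⟩, ⟨u', v', h', rfl, y, hy, hyx⟩⟩
  obtain rfl := Complex.equivRealProdCLM.symm.injective hyx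
  obtain ⟨rfl | rfl, -⟩ := P.arc_disjoint u v h u' v' h' hne ⟨hx, hy⟩
  exacts [⟨u, rfl⟩, ⟨v, rfl⟩]

theorem edgeArc_inter_trace_subset (he : e ∉ S) :
    P.edgeArc e ∩ P.trace S ⊆ P.point '' {w | w ∈ e ∧ ∃ e' ∈ S, w ∈ e'} := by
  rintro z ⟨hz, hzS⟩
  obtain ⟨e', he', hz'⟩ := mem_iUnion₂.1 hzS
  obtain ⟨w, rfl⟩ := P.edgeArc_inter_subset (ne_of_mem_of_not_mem he' he).symm ⟨hz, hz'⟩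
  exact ⟨w, ⟨P.mem_of_point_mem_edgeArc hz, e', he', P.mem_of_point_mem_edgeArc hz'⟩, rfl⟩

theorem edgeArc_inter_trace_subset_pair (he : s(u, v) ∉ S) :
    P.edgeArc s(u, v) ∩ P.trace S ⊆ {P.point u, P.point v} :=
  (P.edgeArc_inter_trace_subset he).trans <| by
    rintro _ ⟨w, ⟨hw, -⟩, rfl⟩
    rcases Sym2.mem_iff.1 hw with rfl | rfl <;> simp

theorem trace_insert : P.trace (insert e S) = P.edgeArc e ∪ P.trace S :=
  biUnion_insert _ _ _

theorem isCompact_trace (hS : S.Finite) : IsCompact (P.trace S) :=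
  hS.isCompact_biUnion fun e _ => P.isCompact_edgeArc e

theorem openArc_subset_compl_trace (he : e ∉ S) : P.openArc e ⊆ (P.trace S)ᶜ := fun _ hz hzS =>
  hz.2 (image_subset_range _ _ (P.edgeArc_inter_trace_subset he ⟨hz.1, hzS⟩))

theorem isPathConnected_openArc (he : e ∈ G.edgeSet) : IsPathConnected (P.openArc e) := by
  induction e with | _ u v
  have hopen : P.openArc s(u, v) = P.edgeArc s(u, v) \ {P.point u, P.point v} := by
    ext z
    refine and_congr_right fun hz => not_congr ⟨?_, ?_⟩
    · rintro ⟨w, rfl⟩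
      rcases Sym2.mem_iff.1 (P.mem_of_point_mem_edgeArc hz) with rfl | rfl <;> simp
    · rintro (rfl | rfl)
      exacts [mem_range_self u, mem_range_self v]
  rw [hopen]
  exact (P.isArc_edgeArc he).isPathConnected_diff

theorem joinedIn_trace_of_reachable (hF : F ≤ G) (h : F.Reachable u v) (hne : u ≠ v) :
    JoinedIn (P.trace F.edgeSet) (P.point u) (P.point v) := by
  obtain ⟨p⟩ := h
  induction p with
  | nil => exact absurd rfl hne
  | @cons u x v hux p ih =>
    have hedge : JoinedIn (P.trace F.edgeSet) (P.point u) (P.point x) :=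
      (P.isArc_edgeArc (hF hux)).joinedIn.mono (subset_biUnion_of_mem hux)
    rcases eq_or_ne x v with rfl | hxv
    · exact hedge
    · exact hedge.trans (ih hxv)

theorem admitsLogs_trace_of_isAcyclic (hF : F.IsAcyclic) (hFG : F ≤ G) (hfin : F.edgeSet.Finite) :
    AdmitsLogs (P.trace F.edgeSet) := by
  induction hn : F.edgeSet.ncard generalizing F with
  | zero =>
    have hempty : P.trace F.edgeSet = ∅ := by
      simp [trace, (ncard_eq_zero hfin).1 hn]
    exact fun f _ _ => ⟨0, continuousOn_const, by simp [hempty]⟩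
  | succ n ih =>
    have hne : F ≠ ⊥ := by
      rintro rfl
      simp at hn
    obtain ⟨a, b, hab, hb⟩ := exists_leaf_of_isAcyclic hF hfin hne
    let F' := F.deleteEdges {s(a, b)}
    have hF' : F' ≤ F := F.deleteEdges_le _
    have hedgeSet : F'.edgeSet = F.edgeSet \ {s(a, b)} := F.edgeSet_deleteEdges _
    have hnotMem : s(a, b) ∉ F'.edgeSet := by simp [hedgeSet]
    have hinsert : F.edgeSet = insert s(a, b) F'.edgeSet := by
      rw [hedgeSet, insert_sdiff_singleton, insert_eq_of_mem (F.mem_edgeSet.2 hab)]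
    have hfin' : F'.edgeSet.Finite := hfin.subset (SimpleGraph.edgeSet_mono hF')
    have hlog : AdmitsLogs (P.trace F'.edgeSet) := by
      refine ih (hF.anti hF') (hF'.trans hFG) hfin' ?_
      rwa [hinsert, ncard_insert_of_notMem hnotMem hfin', Nat.add_right_cancel_iff] at hn
    have hinter : P.edgeArc s(a, b) ∩ P.trace F'.edgeSet ⊆ {P.point a} := by
      refine (P.edgeArc_inter_trace_subset hnotMem).trans ?_
      rintro _ ⟨w, ⟨hw, e, he, hwe⟩, rfl⟩
      rcases Sym2.mem_iff.1 hw with rfl | rfl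
      · rfl
      · obtain ⟨x, rfl⟩ := hwe
        obtain rfl := hb x (hF' he)
        exact absurd (Sym2.eq_swap ▸ he) hnotMem
    rw [hinsert, trace_insert]
    exact .union (P.isCompact_edgeArc _).isClosed (P.isCompact_trace hfin').isClosed
      (subsingleton_singleton.anti hinter) (P.admitsLogs_edgeArc (hFG hab)) hlog

theorem exists_separates_trace_union (hF : F ≤ G) (hFfin : F.edgeSet.Finite)
    (hreach : F.Reachable = G.Reachable) (hS : S.Finite) (hSG : S ⊆ G.edgeSet \ F.edgeSet) :
    ∃ p : Fin (S.ncard + 1) → ℂ, Separates (P.trace (S ∪ F.edgeSet)) p := by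
  induction S, hS using Set.Finite.induction_on with
  | empty =>
    obtain ⟨z, hz⟩ := (ne_univ_iff_exists_notMem _).1 (P.isCompact_trace hFfin).ne_univ
    rw [ncard_empty, zero_add, empty_union]
    exact ⟨fun _ => z, fun i j => ⟨fun _ => Subsingleton.elim i j, fun _ => JoinedIn.refl hz⟩⟩
  | @insert e S he hS ih =>
    obtain ⟨p, hp⟩ := ih ((subset_insert _ _).trans hSG)
    obtain ⟨heG, heF⟩ := hSG (mem_insert e S)
    rw [insert_union, trace_insert, ncard_insert_of_notMem he hS]
    induction e with | _ u v
    refine (P.isArc_edgeArc heG).exists_separates_union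
      (P.isCompact_trace (hS.union hFfin)).isClosed
      (P.edgeArc_inter_trace_subset_pair fun h => h.elim he heF) ?_ hp
    exact (P.joinedIn_trace_of_reachable hF (hreach ▸ heG.reachable) heG.ne).mono
      (biUnion_mono subset_union_right fun _ _ => subset_rfl)

theorem exists_separates_trace [Finite V] [Nonempty V] :
    ∃ n, ∃ p : Fin n → ℂ, Separates (P.trace G.edgeSet) p ∧
      G.edgeSet.ncard + 2 ≤ n + Nat.card V := by
  obtain ⟨F, hFG, hF, hreach⟩ := G.exists_isAcyclic_reachable_eq_le
  have hsub : F.edgeSet ⊆ G.edgeSet := SimpleGraph.edgeSet_mono hFG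
  obtain ⟨p, hp⟩ := P.exists_separates_trace_union hFG (toFinite _) hreach
    (toFinite (G.edgeSet \ F.edgeSet)) subset_rfl
  rw [sdiff_union_of_subset hsub] at hp
  refine ⟨_, p, hp, ?_⟩
  have hcard := ncard_sdiff_add_ncard_of_subset hsub
  have hforest := ncard_edgeSet_add_one_le_of_isAcyclic hF
  lia

variable {P}

theorem mem_edgeSet_faceBoundary {x : ℂ} : e ∈ (P.faceBoundary x).edgeSet ↔
    (P.openArc e ∩ closure (pathComponentIn (P.trace G.edgeSet)ᶜ x)).Nonempty := by
  rw [faceBoundary, SimpleGraph.edgeSet_fromEdgeSet]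
  refine ⟨fun h => h.1, fun h => ⟨h, ?_⟩⟩
  obtain ⟨z, hz, -⟩ := h
  exact G.not_isDiag_of_mem_edgeSet (P.mem_edgeSet_of_mem_edgeArc hz.1)

variable (P)

theorem faceBoundary_le (x : ℂ) : P.faceBoundary x ≤ G := by
  refine SimpleGraph.edgeSet_subset_edgeSet.1 fun e he => ?_
  obtain ⟨z, hz, -⟩ := mem_edgeSet_faceBoundary.1 he
  exact P.mem_edgeSet_of_mem_edgeArc hz.1

theorem isAcyclic_of_isAcyclic_faceBoundary [Finite V] {x : ℂ} (hx : x ∉ P.trace G.edgeSet)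
    (hacyc : (P.faceBoundary x).IsAcyclic) : G.IsAcyclic := by
  let U := pathComponentIn (P.trace G.edgeSet)ᶜ x
  let K := P.trace (P.faceBoundary x).edgeSet ∪ range P.point
  have hG : IsClosed (P.trace G.edgeSet) := (P.isCompact_trace (toFinite _)).isClosed
  have hD : IsCompact (P.trace (P.faceBoundary x).edgeSet) := P.isCompact_trace (toFinite _)
  have hK : IsCompact K := hD.union (finite_range _).isCompact
  have hU : IsOpen U := hG.isOpen_compl.pathComponentIn x
  have lK : AdmitsLogs K :=
    (P.admitsLogs_trace_of_isAcyclic hacyc (P.faceBoundary_le x) (toFinite _)).union_finite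
      hD.isClosed (finite_range _)
  obtain ⟨y, hyU, hyP⟩ := ((finite_range P.point).countable.dense_compl ℝ).inter_open_nonempty U hU
    ⟨x, mem_pathComponentIn_self hx⟩
  have hyK : y ∉ K := fun hy => hy.elim (fun hyD => (pathComponentIn_subset hyU)
    (biUnion_mono (SimpleGraph.edgeSet_mono (P.faceBoundary_le x)) (fun _ _ => subset_rfl) hyD)) hyP
  have hclosure : closure U ∩ Kᶜ ⊆ U := by
    rintro z ⟨hz, hzK⟩
    refine closure_pathComponentIn_compl_diff_subset hG x ⟨hz, fun hzG => hzK (Or.inl ?_)⟩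
    obtain ⟨e, -, hze⟩ := mem_iUnion₂.1 hzG
    exact mem_biUnion (mem_edgeSet_faceBoundary.2 ⟨z, ⟨hze, fun h => hzK (Or.inr h)⟩, hz⟩) hze
  have hKU : Kᶜ ⊆ U := by
    have hconn : IsPathConnected Kᶜ := ⟨y, hyK, fun _ hz => lK.joinedIn_compl hK hyK hz⟩
    exact hconn.isConnected.isPreconnected.subset_of_closure_inter_subset hU ⟨y, hyK, hyU⟩ hclosure
  refine hacyc.anti (SimpleGraph.edgeSet_subset_edgeSet.1 fun e he => ?_)
  obtain ⟨z, hz⟩ := (P.isPathConnected_openArc he).nonempty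
  by_contra heD
  have hzK : z ∉ K := fun h => h.elim (P.openArc_subset_compl_trace heD hz) hz.2
  exact pathComponentIn_subset (hKU hzK) (mem_biUnion he hz.1)

theorem exists_joinedIn_of_mem_edgeSet_faceBoundary [Finite V] {x : ℂ}
    (he : e ∈ (P.faceBoundary x).edgeSet) :
    ∃ z ∈ P.openArc e, JoinedIn (P.trace (G.edgeSet \ {e}))ᶜ x z := by
  obtain ⟨z, hz, hzx⟩ := mem_edgeSet_faceBoundary.1 he
  have hsub : P.trace (G.edgeSet \ {e}) ⊆ P.trace G.edgeSet :=
    biUnion_mono sdiff_subset fun _ _ => subset_rfl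
  exact ⟨z, hz, closure_pathComponentIn_compl_diff_subset (P.isCompact_trace (toFinite _)).isClosed
    x ⟨closure_mono (pathComponentIn_mono (compl_subset_compl.2 hsub)) hzx,
      P.openArc_subset_compl_trace (by simp) hz⟩⟩

theorem card_le_two_of_mem_edgeSet_faceBoundary [Finite V] {ι : Type*} {p : ι → ℂ}
    (hp : Separates (P.trace G.edgeSet) p) (he : e ∈ G.edgeSet) {s : Finset ι}
    (hs : ∀ i ∈ s, e ∈ (P.faceBoundary (p i)).edgeSet) : s.card ≤ 2 := by
  by_contra! hcard
  obtain ⟨i, hi, j, hj, k, hk, hij, hik, hjk⟩ := Finset.two_lt_card.1 hcard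
  let B := P.trace (G.edgeSet \ {e})
  have hjoin {i j : ι} (hi : i ∈ s) (hj : j ∈ s) : JoinedIn Bᶜ (p i) (p j) := by
    obtain ⟨x, hx, hix⟩ := P.exists_joinedIn_of_mem_edgeSet_faceBoundary (hs i hi)
    obtain ⟨y, hy, hjy⟩ := P.exists_joinedIn_of_mem_edgeSet_faceBoundary (hs j hj)
    have hxy := ((P.isPathConnected_openArc he).joinedIn x hx y hy).mono
      (P.openArc_subset_compl_trace (by simp : e ∉ G.edgeSet \ {e}))
    exact (hix.trans hxy).trans hjy.symm
  have htrace : P.trace G.edgeSet = P.edgeArc e ∪ B := by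
    rw [← trace_insert, insert_sdiff_singleton, insert_eq_of_mem he]
  have hsep : Separates (P.edgeArc e ∪ B) (p ∘ ![i, j, k]) := by
    rw [← htrace]
    refine hp.comp_injective ?_
    intro a b
    fin_cases a <;> fin_cases b <;> simp [hij, hik, hjk, hij.symm, hik.symm, hjk.symm]
  induction e with | _ u v
  exact hsep.not_joinedIn_of_union (P.isCompact_edgeArc _) (P.isCompact_trace (toFinite _))
    (P.admitsLogs_edgeArc he) (P.edgeArc_inter_trace_subset_pair (by simp))
    ⟨hjoin hi hj, hjoin hi hk⟩

theorem mul_four_le_ncard_edgeSet_mul_two [Finite V] (htf : G.CliqueFree 3) (hG : ¬ G.IsAcyclic)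
    {n : ℕ} {p : Fin n → ℂ} (hp : Separates (P.trace G.edgeSet) p) :
    n * 4 ≤ G.edgeSet.ncard * 2 := by
  classical
  have hfin : G.edgeSet.Finite := toFinite _
  rw [ncard_eq_toFinset_card _ hfin]
  nth_rw 1 [← Fintype.card_fin n]
  refine Finset.card_mul_le_card_mul (s := .univ) (t := hfin.toFinset)
    (fun i e => e ∈ (P.faceBoundary (p i)).edgeSet) (fun i _ => ?_) fun e he =>
      P.card_le_two_of_mem_edgeSet_faceBoundary hp (hfin.mem_toFinset.1 he) (by simp)
  have hle : P.faceBoundary (p i) ≤ G := P.faceBoundary_le (p i)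
  have hset : (hfin.toFinset.bipartiteAbove (fun i e => e ∈ (P.faceBoundary (p i)).edgeSet) i :
      Set (Sym2 V)) = (P.faceBoundary (p i)).edgeSet := by
    ext e
    simpa using fun he => SimpleGraph.edgeSet_mono hle he
  rw [← ncard_coe_finset, hset]
  exact four_le_ncard_edgeSet_of_not_isAcyclic (htf.anti hle) (toFinite _)
    (mt (P.isAcyclic_of_isAcyclic_faceBoundary (hp.notMem i)) hG)

end PlanarEmbedding

theorem ncard_edgeSet_le_two_mul_card_of_isPlanar {V : Type*} [Finite V] {G : SimpleGraph V}
    (hG : G.IsPlanar) (htf : G.CliqueFree 3) : G.edgeSet.ncard ≤ 2 * Nat.card V := by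
  obtain ⟨P⟩ := hG
  rcases isEmpty_or_nonempty V with hV | hV
  · simp [Subsingleton.elim G ⊥]
  · by_cases hacyc : G.IsAcyclic
    · have := ncard_edgeSet_add_one_le_of_isAcyclic hacyc
      lia
    · obtain ⟨n, p, hp, hn⟩ := P.exists_separates_trace
      have := P.mul_four_le_ncard_edgeSet_mul_two htf hacyc hp
      lia

theorem stmt5_general {V : Type*} (G : SimpleGraph V) (hG : G.IsPlanar) (htf : G.CliqueFree 3) :
    ∃ r : V → V → Prop,
      (∀ u w, G.Adj u w ↔ (r u w ∨ r w u)) ∧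
      (∀ u w, r u w → ¬ r w u) ∧
      (∀ u, {w | r u w}.encard ≤ 2) := by
  obtain ⟨P⟩ := hG
  refine exists_orientation_of_ncard_edgeSet_induce_le 2 fun W => ?_
  let f := SimpleGraph.Embedding.induce (G := G) (W : Set V)
  simpa using ncard_edgeSet_le_two_mul_card_of_isPlanar ⟨P.comap f.toHom f.injective⟩
    (htf.comap f.isContained)

/-- Every finite triangle-free planar graph admits an orientation of its edges
with maximum out-degree at most 2. -/
theorem stmt5 {V : Type*} [Fintype V] (G : SimpleGraph V)
    (hG : G.IsPlanar) (htf : G.CliqueFree 3) :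
    ∃ r : V → V → Prop,
      (∀ u w, G.Adj u w ↔ (r u w ∨ r w u)) ∧
      (∀ u w, r u w → ¬ r w u) ∧
      (∀ u, {w | r u w}.ncard ≤ 2) := by
  obtain ⟨r, hr, hasymm, hcard⟩ := stmt5_general G hG htf
  exact ⟨r, hr, hasymm, fun u => ENat.toNat_le_of_le_natCast (hcard u)⟩
end
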